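/- arXiv:2308.08462 — 6 statements merged into one kernel-verified Lean document; each statement's English description precedes it below -/
import Mathlib

section
/- Fix an integer range R ≥ 1 and parameters β, ε ∈ (0,1). There exists J_* > 0, depending only on R, β, ε (and not on N), such that for every 0 < J ≤ J_*, every N ≥ 1 and every fiducial site i_*, there exist, measurably in the disorder h ∈ [0,1]^N, an operator O on ℋ_N and a natural number ℓ such that: ‖J_E − i[H, O]‖ ≤ exp(−((1−β)/4)·(log(1/J))^{2−ε}); ‖O‖ ≤ J^{(1−β)/(8R)} + 2ℓ; and for every ℓ₀ ≥ 1, Prob(ℓ ≥ ℓ₀) ≤ exp(−c₀·(log(1/J))^ε·ℓ₀), where c₀ = 10^{−3}·β/R. -/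
open MeasureTheory

/-- Observables on the spin chain of length `N`: matrices indexed by spin configurations. -/
abbrev SpinOp (N : ℕ) := Matrix (Fin N → Bool) (Fin N → Bool) ℂ

/-- The ℓ² → ℓ² operator norm of a complex square matrix. -/
noncomputable def opNorm {ι : Type*} [Fintype ι] [DecidableEq ι] (A : Matrix ι ι ℂ) : ℝ :=
  ‖Matrix.toEuclideanCLM (𝕜 := ℂ) A‖

/-- `A` is supported on the set of sites `S`: matrix elements vanish between configurations
differing outside `S` and depend only on the restrictions to `S`. -/
def SupportedOn {N : ℕ} (A : SpinOp N) (S : Set (Fin N)) : Prop :=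
  (∀ σ σ' : Fin N → Bool, (∃ j, j ∉ S ∧ σ j ≠ σ' j) → A σ σ' = 0) ∧
  (∀ σ σ' τ τ' : Fin N → Bool,
    (∀ j ∈ S, σ j = τ j) → (∀ j ∈ S, σ' j = τ' j) →
    (∀ j, j ∉ S → σ j = σ' j) → (∀ j, j ∉ S → τ j = τ' j) → A σ σ' = A τ τ')

/-- The Pauli-Z operator at site `i`. -/
noncomputable def PauliZ {N : ℕ} (i : Fin N) : SpinOp N :=
  Matrix.diagonal fun σ => if σ i then 1 else -1

/-- The disordered chain Hamiltonian `H = Σ_i (h_i Z_i + J V_i)`. -/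
noncomputable def Ham (N : ℕ) (J : ℝ) (h : Fin N → ℝ) (V : Fin N → SpinOp N) : SpinOp N :=
  ∑ i : Fin N, (h i • PauliZ i + J • V i)

/-- The left Hamiltonian `H_L = Σ_{i ≤ i_*} (h_i Z_i + J V_i)` for a fiducial site `i_*`. -/
noncomputable def HamL (N : ℕ) (J : ℝ) (h : Fin N → ℝ) (V : Fin N → SpinOp N)
    (istar : Fin N) : SpinOp N :=
  ∑ i ∈ Finset.univ.filter fun i : Fin N => i ≤ istar, (h i • PauliZ i + J • V i)

/-- The energy current `J_E = i[H, H_L]` through the fiducial site. -/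
noncomputable def current (N : ℕ) (J : ℝ) (h : Fin N → ℝ) (V : Fin N → SpinOp N)
    (istar : Fin N) : SpinOp N :=
  Complex.I • (Ham N J h V * HamL N J h V istar - HamL N J h V istar * Ham N J h V)

/-- The disorder measure: i.i.d. uniform fields on `[0,1]`. -/
noncomputable def disorderMeasure (N : ℕ) : Measure (Fin N → ℝ) :=
  Measure.pi fun _ => volume.restrict (Set.Icc (0 : ℝ) 1)

/-!
Let `b` be the cut just to the right of the fiducial site, and move to the left of `b` in steps of
`2w` until, for the first time, no two configurations that differ only within distance `w` of the
cut have field energies closer than `δ`. At that cut `c` the sum of the terms to the left can be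
turned into an approximately conserved quantity by perturbation theory in `J`: at every order one
divides by energy differences of configurations differing near `c` only, so the correction is local
and each order costs a factor of `w J / δ`. Then `O` is the energy between `c` and `b` plus this
correction. These divisions need the commutator to be cancelled to vanish between configurations of
equal energy. Off the diagonal this is the gap condition. On the diagonal the point is that a
commutator with the Hamiltonian has trace zero against every spectral projection of the
Hamiltonian, which excludes diagonal entries order by order in `J`.

A cut fails with probability at most `9 ^ w * δ`, because the energy difference of two given
configurations has density at most one, and distinct cuts depend on disjoint sets of fields.
Choosing `δ = J ^ (β / 2)` and `w` of order `log (1 / J) ^ (1 - ε)`, hence also the order of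
perturbation theory, balances the two effects.
-/

attribute [local instance] LieRing.ofAssociativeRing LieAlgebra.ofAssociativeAlgebra

open scoped symmDiff

section SchurNorm

variable {ι : Type*} [Fintype ι] {A B : Matrix ι ι ℂ} {r : ℝ}

section

attribute [local instance] Matrix.linftyOpNormedAddCommGroup Matrix.linftyOpNormedSpace

/-- The larger of the maximal absolute row sum and the maximal absolute column sum of a matrix.
It dominates the operator norm and, unlike the latter, is monotone in the absolute values of the
entries. -/
noncomputable def schurNorm : Seminorm ℝ (Matrix ι ι ℂ) :=
  normSeminorm ℝ (Matrix ι ι ℂ) ⊔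
    (normSeminorm ℝ (Matrix ι ι ℂ)).comp (Matrix.transposeLinearEquiv ι ι ℝ ℂ).toLinearMap

theorem schurNorm_def (A : Matrix ι ι ℂ) : schurNorm A = max ‖A‖ ‖A.transpose‖ := rfl

theorem linfty_opNorm_le_iff (hr : 0 ≤ r) : ‖A‖ ≤ r ↔ ∀ i, ∑ j, ‖A i j‖ ≤ r := by
  lift r to NNReal using hr
  rw [← coe_nnnorm, NNReal.coe_le_coe, Matrix.linfty_opNNNorm_def, Finset.sup_le_iff]
  simp [← NNReal.coe_le_coe]

theorem schurNorm_le_iff (hr : 0 ≤ r) :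
    schurNorm A ≤ r ↔ (∀ i, ∑ j, ‖A i j‖ ≤ r) ∧ ∀ j, ∑ i, ‖A i j‖ ≤ r := by
  rw [schurNorm_def, max_le_iff, linfty_opNorm_le_iff hr, linfty_opNorm_le_iff hr]
  rfl

theorem schurNorm_mul_le (A B : Matrix ι ι ℂ) :
    schurNorm (A * B) ≤ schurNorm A * schurNorm B := by
  simp only [schurNorm_def, Matrix.transpose_mul]
  refine max_le ((Matrix.linfty_opNorm_mul _ _).trans ?_)
    ((Matrix.linfty_opNorm_mul _ _).trans ?_)
  · gcongr <;> exact le_max_left _ _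
  · rw [mul_comm]
    gcongr <;> exact le_max_right _ _

theorem schurNorm_diagonal_le [DecidableEq ι] {d : ι → ℂ} (hr : 0 ≤ r) (h : ∀ i, ‖d i‖ ≤ r) :
    schurNorm (Matrix.diagonal d) ≤ r := by
  rw [schurNorm_def, Matrix.diagonal_transpose, max_self, Matrix.linfty_opNorm_diagonal]
  exact (pi_norm_le_iff_of_nonneg hr).2 h

end

theorem sum_norm_row_le_schurNorm (A : Matrix ι ι ℂ) (i : ι) : ∑ j, ‖A i j‖ ≤ schurNorm A :=
  ((schurNorm_le_iff (apply_nonneg _ _)).1 le_rfl).1 i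

theorem sum_norm_col_le_schurNorm (A : Matrix ι ι ℂ) (j : ι) : ∑ i, ‖A i j‖ ≤ schurNorm A :=
  ((schurNorm_le_iff (apply_nonneg _ _)).1 le_rfl).2 j

theorem schurNorm_le_mul_of_norm_le (hr : 0 ≤ r) (h : ∀ i j, ‖B i j‖ ≤ r * ‖A i j‖) :
    schurNorm B ≤ r * schurNorm A := by
  refine (schurNorm_le_iff (by positivity)).2 ⟨fun i => ?_, fun j => ?_⟩
  · grw [Finset.sum_le_sum fun j _ => h i j, ← Finset.mul_sum, sum_norm_row_le_schurNorm]
  · grw [Finset.sum_le_sum fun i _ => h i j, ← Finset.mul_sum, sum_norm_col_le_schurNorm]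

theorem schurNorm_lie_le (A B : Matrix ι ι ℂ) :
    schurNorm ⁅A, B⁆ ≤ 2 * schurNorm A * schurNorm B := by
  rw [Ring.lie_def]
  linarith [map_sub_le_add schurNorm (A * B) (B * A), schurNorm_mul_le A B, schurNorm_mul_le B A]

theorem norm_toEuclideanCLM_apply_sq_le [DecidableEq ι] (A : Matrix ι ι ℂ)
    (x : EuclideanSpace ℂ ι) (i : ι) :
    ‖Matrix.toEuclideanCLM (𝕜 := ℂ) A x i‖ ^ 2 ≤ schurNorm A * ∑ j, ‖A i j‖ * ‖x j‖ ^ 2 := by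
  have triangle : ‖Matrix.toEuclideanCLM (𝕜 := ℂ) A x i‖ ≤ ∑ j, ‖A i j‖ * ‖x j‖ := by
    rw [Matrix.ofLp_toEuclideanCLM, Matrix.mulVec, dotProduct]
    exact norm_sum_le_of_le _ fun j _ => norm_mul_le _ _
  have cauchySchwarz : (∑ j, ‖A i j‖ * ‖x j‖) ^ 2 ≤
      (∑ j, ‖A i j‖) * ∑ j, ‖A i j‖ * ‖x j‖ ^ 2 :=
    Finset.sum_sq_le_sum_mul_sum_of_sq_le_mul _ (fun _ _ => norm_nonneg _)
      (fun _ _ => by positivity) (fun _ _ => le_of_eq (by ring))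
  grw [triangle, cauchySchwarz, sum_norm_row_le_schurNorm]

theorem opNorm_le_schurNorm [DecidableEq ι] (A : Matrix ι ι ℂ) : opNorm A ≤ schurNorm A := by
  have hA : 0 ≤ schurNorm A := apply_nonneg _ _
  refine ContinuousLinearMap.opNorm_le_bound _ hA fun x => ?_
  refine le_of_sq_le_sq ?_ (by positivity)
  calc ‖Matrix.toEuclideanCLM (𝕜 := ℂ) A x‖ ^ 2
      ≤ ∑ i, schurNorm A * ∑ j, ‖A i j‖ * ‖x j‖ ^ 2 := by
        rw [EuclideanSpace.norm_sq_eq]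
        exact Finset.sum_le_sum fun i _ => norm_toEuclideanCLM_apply_sq_le A x i
    _ = schurNorm A * ∑ j, (∑ i, ‖A i j‖) * ‖x j‖ ^ 2 := by
        rw [← Finset.mul_sum, Finset.sum_comm]; simp_rw [Finset.sum_mul]
    _ ≤ schurNorm A * ∑ j, schurNorm A * ‖x j‖ ^ 2 := by
        gcongr with j
        exact sum_norm_col_le_schurNorm A j
    _ = (schurNorm A * ‖x‖) ^ 2 := by
        rw [← Finset.mul_sum, mul_pow, EuclideanSpace.norm_sq_eq]; ring

end SchurNorm

section OpNorm

open scoped Matrix.Norms.L2Operator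

variable {ι : Type*} [Fintype ι] [DecidableEq ι]

theorem opNorm_add_le (A B : Matrix ι ι ℂ) : opNorm (A + B) ≤ opNorm A + opNorm B :=
  norm_add_le A B

theorem opNorm_sum_le {κ : Type*} (s : Finset κ) (A : κ → Matrix ι ι ℂ) :
    opNorm (∑ k ∈ s, A k) ≤ ∑ k ∈ s, opNorm (A k) :=
  norm_sum_le s A

theorem opNorm_smul (c : ℂ) (A : Matrix ι ι ℂ) : opNorm (c • A) = ‖c‖ * opNorm A :=
  norm_smul c A

theorem norm_apply_le_opNorm (A : Matrix ι ι ℂ) (i j : ι) : ‖A i j‖ ≤ opNorm A := by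
  have h := (Matrix.toEuclideanCLM (𝕜 := ℂ) A).le_opNorm (EuclideanSpace.single j 1)
  rw [PiLp.norm_single, norm_one, mul_one] at h
  refine le_trans ?_ ((PiLp.norm_apply_le _ i).trans h)
  simp [Matrix.ofLp_toEuclideanCLM]

end OpNorm

section Support

variable {N : ℕ} {A B : SpinOp N} {S T : Set (Fin N)}

theorem supportedOn_iff : SupportedOn A S ↔
    (∀ σ σ', A σ σ' ≠ 0 → Set.EqOn σ σ' Sᶜ) ∧
      ∀ ρ : Fin N → Bool, Set.EqOn ρ ⊥ S → ∀ σ σ', A (σ ∆ ρ) (σ' ∆ ρ) = A σ σ' := by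
  have entries : (∀ σ σ', (∃ j, j ∉ S ∧ σ j ≠ σ' j) → A σ σ' = 0) ↔
      ∀ σ σ', A σ σ' ≠ 0 → Set.EqOn σ σ' Sᶜ := by
    refine forall₂_congr fun σ σ' => ?_
    rw [← not_imp_not]
    simp [Set.EqOn]
  refine and_congr_left' entries |>.trans (and_congr_right fun hA => ⟨fun h ρ hρ σ σ' => ?_,
    fun h σ σ' τ τ' hσ hσ' hσσ' hττ' => ?_⟩)
  · by_cases hσσ' : Set.EqOn σ σ' Sᶜ
    · refine h _ _ _ _ (fun j hj => ?_) (fun j hj => ?_) (fun j hj => ?_) fun j hj => hσσ' hj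
      · simp [Pi.symmDiff_apply, hρ hj]
      · simp [Pi.symmDiff_apply, hρ hj]
      · simp [Pi.symmDiff_apply, hσσ' hj]
    · rw [not_imp_comm.1 (hA σ σ') hσσ', not_imp_comm.1 (hA _ _)]
      exact fun hρ => hσσ' fun j hj => symmDiff_left_injective (ρ j) (hρ hj)
  · have shift : σ' ∆ (σ ∆ τ) = τ' := by
      funext j
      by_cases hj : j ∈ S
      · simp [Pi.symmDiff_apply, hσ j hj, hσ' j hj]
      · simp [Pi.symmDiff_apply, ← hσσ' j hj, hττ' j hj]
    have := h (σ ∆ τ) (fun j hj => symmDiff_eq_bot.2 (hσ j hj)) σ σ'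
    rwa [symmDiff_symmDiff_cancel_left, shift, eq_comm] at this

namespace SupportedOn

theorem eqOn_compl (hA : SupportedOn A S) {σ σ' : Fin N → Bool} (h : A σ σ' ≠ 0) :
    Set.EqOn σ σ' Sᶜ :=
  (supportedOn_iff.1 hA).1 σ σ' h

theorem apply_symmDiff (hA : SupportedOn A S) {ρ : Fin N → Bool} (hρ : Set.EqOn ρ ⊥ S)
    (σ σ' : Fin N → Bool) : A (σ ∆ ρ) (σ' ∆ ρ) = A σ σ' :=
  (supportedOn_iff.1 hA).2 ρ hρ σ σ'

theorem mono (hA : SupportedOn A S) (h : S ⊆ T) : SupportedOn A T :=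
  supportedOn_iff.2 ⟨fun _ _ hne => (hA.eqOn_compl hne).mono (Set.compl_subset_compl.2 h),
    fun _ hρ => hA.apply_symmDiff (hρ.mono h)⟩

theorem mul (hA : SupportedOn A S) (hB : SupportedOn B S) : SupportedOn (A * B) S := by
  refine supportedOn_iff.2 ⟨fun σ σ' h => ?_, fun ρ hρ σ σ' => ?_⟩
  · obtain ⟨τ, -, hτ⟩ := Finset.exists_ne_zero_of_sum_ne_zero h
    exact (hA.eqOn_compl (left_ne_zero_of_mul hτ)).trans (hB.eqOn_compl (right_ne_zero_of_mul hτ))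
  · rw [Matrix.mul_apply, Matrix.mul_apply,
      ← Equiv.sum_comp (symmDiff_left_involutive ρ).toPerm]
    exact Finset.sum_congr rfl fun τ _ =>
      congr_arg₂ _ (hA.apply_symmDiff hρ _ _) (hB.apply_symmDiff hρ _ _)

theorem diagonal {d : (Fin N → Bool) → ℂ}
    (hd : ∀ σ τ, Set.EqOn σ τ S → d σ = d τ) : SupportedOn (Matrix.diagonal d) S := by
  refine supportedOn_iff.2 ⟨fun σ σ' h => ?_, fun ρ hρ σ σ' => ?_⟩
  · rw [not_imp_comm.1 (Matrix.diagonal_apply_ne d) h]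
    exact Set.eqOn_refl _ _
  · simp only [Matrix.diagonal_apply, symmDiff_left_inj]
    rw [hd (σ ∆ ρ) σ fun j hj => by simp [Pi.symmDiff_apply, hρ hj]]

end SupportedOn

/-- The algebra of operators supported on `S`. -/
def supportedSubalgebra (S : Set (Fin N)) : Subalgebra ℝ (SpinOp N) where
  carrier := {A | SupportedOn A S}
  mul_mem' := SupportedOn.mul
  add_mem' {A B} hA hB := by
    refine supportedOn_iff.2 ⟨fun σ σ' h => ?_, fun ρ hρ σ σ' => ?_⟩
    · by_cases h0 : A σ σ' = 0
      · refine hB.eqOn_compl fun h1 => h ?_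
        simp [h0, h1]
      · exact hA.eqOn_compl h0
    · simp [hA.apply_symmDiff hρ, hB.apply_symmDiff hρ]
  algebraMap_mem' r := SupportedOn.diagonal fun _ _ _ => rfl

theorem mem_supportedSubalgebra : A ∈ supportedSubalgebra S ↔ SupportedOn A S := Iff.rfl

theorem card_eqOn_compl_le (S : Set (Fin N)) (σ : Fin N → Bool)
    [DecidablePred fun τ => Set.EqOn σ τ Sᶜ] :
    (Finset.univ.filter fun τ => Set.EqOn σ τ Sᶜ).card ≤ 2 ^ S.ncard := by
  classical
  calc _ ≤ (Finset.univ : Finset (S → Bool)).card := by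
        refine Finset.card_le_card_of_injOn S.domRestrict (fun _ _ => Finset.mem_univ _) ?_
        intro τ hτ τ' hτ' h
        simp only [Finset.coe_filter_univ, Set.mem_ofPred_eq] at hτ hτ'
        funext j
        by_cases hj : j ∈ S
        · exact congrFun h ⟨j, hj⟩
        · exact (hτ hj).symm.trans (hτ' hj)
    _ = 2 ^ S.ncard := by simp [← Nat.card_coe_set_eq]

namespace SupportedOn

theorem lie (hA : SupportedOn A S) (hB : SupportedOn B S) : SupportedOn ⁅A, B⁆ S :=
  (supportedSubalgebra S).sub_mem (hA.mul hB) (hB.mul hA)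

theorem pauliZ {i : Fin N} (hi : i ∈ S) : SupportedOn (PauliZ i) S :=
  .diagonal fun σ τ h => by rw [h hi]

theorem mul_apply_reflect (hA : SupportedOn A S) (hB : SupportedOn B T) (h : Disjoint S T)
    {σ τ σ' : Fin N → Bool} (hne : A σ τ * B τ σ' ≠ 0) :
    A σ τ * B τ σ' = B σ (τ ∆ (σ ∆ σ')) * A (τ ∆ (σ ∆ σ')) σ' := by
  have hρA : Set.EqOn (τ ∆ σ') ⊥ S := fun j hj =>
    symmDiff_eq_bot.2 (hB.eqOn_compl (right_ne_zero_of_mul hne) (Set.disjoint_left.1 h hj))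
  have hρB : Set.EqOn (σ ∆ τ) ⊥ T := fun j hj =>
    symmDiff_eq_bot.2 (hA.eqOn_compl (left_ne_zero_of_mul hne) (Set.disjoint_right.1 h hj))
  rw [← hA.apply_symmDiff hρA, ← hB.apply_symmDiff hρB, mul_comm]
  congr 2 <;> simp [symmDiff_comm, symmDiff_left_comm]

theorem lie_eq_zero (hA : SupportedOn A S) (hB : SupportedOn B T) (h : Disjoint S T) :
    ⁅A, B⁆ = 0 := by
  rw [Ring.lie_def, sub_eq_zero]
  ext σ σ'
  rw [Matrix.mul_apply, Matrix.mul_apply,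
    ← Equiv.sum_comp (symmDiff_left_involutive (σ ∆ σ')).toPerm fun τ => B σ τ * A τ σ']
  refine Finset.sum_congr rfl fun τ _ => ?_
  change _ = B σ (τ ∆ (σ ∆ σ')) * A (τ ∆ (σ ∆ σ')) σ'
  by_cases hAB : A σ τ * B τ σ' = 0
  · by_cases hBA : B σ (τ ∆ (σ ∆ σ')) * A (τ ∆ (σ ∆ σ')) σ' = 0
    · rw [hAB, hBA]
    · rw [hB.mul_apply_reflect hA h.symm hBA, symmDiff_symmDiff_cancel_right]
  · exact hA.mul_apply_reflect hB h hAB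

theorem schurNorm_le (hA : SupportedOn A S) : schurNorm A ≤ 2 ^ S.ncard * opNorm A := by
  classical
  have hA0 : 0 ≤ opNorm A := norm_nonneg _
  have sum_le (σ : Fin N → Bool) (f : (Fin N → Bool) → ℂ) (hf : ∀ τ, ‖f τ‖ ≤ opNorm A)
      (hf0 : ∀ τ, f τ ≠ 0 → Set.EqOn σ τ Sᶜ) : ∑ τ, ‖f τ‖ ≤ 2 ^ S.ncard * opNorm A := by
    rw [← Finset.sum_filter_of_ne (p := fun τ => Set.EqOn σ τ Sᶜ)
      fun τ _ h => hf0 τ (norm_ne_zero_iff.1 h)]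
    grw [Finset.sum_le_card_nsmul _ _ _ fun τ _ => hf τ, nsmul_eq_mul]
    gcongr
    exact_mod_cast card_eqOn_compl_le S σ
  exact (schurNorm_le_iff (by positivity)).2
    ⟨fun σ => sum_le σ (A σ) (norm_apply_le_opNorm A σ) fun τ => hA.eqOn_compl,
      fun σ => sum_le σ (A · σ) (norm_apply_le_opNorm A · σ) fun τ h => (hA.eqOn_compl h).symm⟩

end SupportedOn

end Support

section PerturbationTheory

variable {ι : Type*} {r : Setoid ι} {E : ι → ℂ} {V A B : Matrix ι ι ℂ} {W : ℕ → Matrix ι ι ℂ}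

/-- The partial inverse of `A ↦ ⁅diagonal E, A⁆`: entries between configurations of equal energy
are set to zero, by the convention `x / 0 = 0`. -/
noncomputable def invAd (E : ι → ℂ) (A : Matrix ι ι ℂ) : Matrix ι ι ℂ :=
  Matrix.of fun σ τ => A σ τ / (E σ - E τ)

variable [Fintype ι] [DecidableEq ι]

/-- The algebra of matrices that are block diagonal with respect to the classes of `r`. -/
def blockDiagonalSubalgebra (r : Setoid ι) : Subalgebra ℝ (Matrix ι ι ℂ) where
  carrier := {A | ∀ σ τ, A σ τ ≠ 0 → r σ τ}
  mul_mem' {A B} hA hB σ τ h := by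
    obtain ⟨ρ, -, hρ⟩ := Finset.exists_ne_zero_of_sum_ne_zero h
    exact r.trans (hA σ ρ (left_ne_zero_of_mul hρ)) (hB ρ τ (right_ne_zero_of_mul hρ))
  add_mem' {A B} hA hB σ τ h := by
    by_cases h0 : A σ τ = 0
    · exact hB σ τ fun h1 => h (by simp [h0, h1])
    · exact hA σ τ h0
  algebraMap_mem' c σ τ h := by
    rw [not_imp_comm.1 (Matrix.diagonal_apply_ne _) h]

theorem diagonal_mem_blockDiagonalSubalgebra (r : Setoid ι) (d : ι → ℂ) :
    Matrix.diagonal d ∈ blockDiagonalSubalgebra r := fun σ τ h => by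
  rw [not_imp_comm.1 (Matrix.diagonal_apply_ne d) h]

theorem lie_mem_blockDiagonalSubalgebra (hA : A ∈ blockDiagonalSubalgebra r)
    (hB : B ∈ blockDiagonalSubalgebra r) : ⁅A, B⁆ ∈ blockDiagonalSubalgebra r :=
  sub_mem (mul_mem hA hB) (mul_mem hB hA)

theorem lie_diagonal_apply (E : ι → ℂ) (A : Matrix ι ι ℂ) (σ τ : ι) :
    ⁅Matrix.diagonal E, A⁆ σ τ = (E σ - E τ) * A σ τ := by
  rw [Ring.lie_def, Matrix.sub_apply, Matrix.diagonal_mul, Matrix.mul_diagonal]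
  ring

theorem invAd_mem_blockDiagonalSubalgebra (E : ι → ℂ) (hA : A ∈ blockDiagonalSubalgebra r) :
    invAd E A ∈ blockDiagonalSubalgebra r :=
  fun σ τ h => hA σ τ (div_ne_zero_iff.1 h).1

theorem lie_diagonal_invAd (hE : ∀ σ τ, r σ τ → E σ = E τ → σ = τ)
    (hA : A ∈ blockDiagonalSubalgebra r) (hA0 : ∀ σ, A σ σ = 0) :
    ⁅Matrix.diagonal E, invAd E A⁆ = A := by
  ext σ τ
  rw [lie_diagonal_apply, invAd, Matrix.of_apply]
  refine mul_div_cancel_of_imp' fun h => ?_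
  by_contra hne
  obtain rfl := hE σ τ (hA σ τ hne) (sub_eq_zero.1 h)
  exact hne (hA0 σ)

theorem schurNorm_invAd_le {δ : ℝ} (hδ : 0 < δ)
    (hgap : ∀ σ τ, r σ τ → σ ≠ τ → δ ≤ ‖E σ - E τ‖) (hA : A ∈ blockDiagonalSubalgebra r) :
    schurNorm (invAd E A) ≤ δ⁻¹ * schurNorm A := by
  refine schurNorm_le_mul_of_norm_le (by positivity) fun σ τ => ?_
  rw [invAd, Matrix.of_apply, norm_div, div_eq_inv_mul]
  rcases eq_or_ne σ τ with rfl | hne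
  · simp only [sub_self, norm_zero, inv_zero, zero_mul]
    positivity
  rcases eq_or_ne (A σ τ) 0 with h0 | h0
  · simp [h0]
  gcongr
  exact hgap σ τ (hA σ τ h0) hne

theorem trace_mul_lie_eq_zero (h : Commute A V) : (A * ⁅V, B⁆).trace = 0 := by
  rw [Ring.lie_def, mul_sub, Matrix.trace_sub, ← mul_assoc, ← mul_assoc,
    Matrix.trace_mul_cycle A B V, h.eq, sub_self]

open Polynomial in
theorem aeval_diagonal (p : ℂ[X]) (E : ι → ℂ) :
    aeval (Matrix.diagonal E) p = Matrix.diagonal fun σ => p.eval (E σ) := by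
  rw [← Matrix.diagonalAlgHom_apply (R := ℂ), aeval_algHom_apply, Matrix.diagonalAlgHom_apply]
  congr 1
  ext σ
  simp

section Projection

open Polynomial

open Classical in
/-- `Π p(A)`, where `Π` projects onto the block of `σ` and `p` interpolates the indicator of
`E σ` on the values of `E` over that block. It commutes with `A`, depends continuously on `A`, and
at `A = diagonal E` it is the projection onto the basis vector `σ`. -/
noncomputable def interpolatedProjection (r : Setoid ι) (E : ι → ℂ) (σ : ι) (A : Matrix ι ι ℂ) :
    Matrix ι ι ℂ :=
  Matrix.diagonal (fun τ => if r σ τ then 1 else 0) *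
    aeval A (Lagrange.basis (Finset.univ.filter (r σ)) E σ)

theorem continuous_interpolatedProjection (r : Setoid ι) (E : ι → ℂ) (σ : ι) :
    Continuous (interpolatedProjection r E σ) :=
  continuous_const.mul (Polynomial.continuous_aeval _)

theorem commute_interpolatedProjection (hA : A ∈ blockDiagonalSubalgebra r) (E : ι → ℂ) (σ : ι) :
    Commute (interpolatedProjection r E σ A) A := by
  refine Commute.mul_left ?_ ?_
  · ext i j
    rw [Matrix.diagonal_mul, Matrix.mul_diagonal, mul_comm]
    by_cases h : A i j = 0
    · simp [h]
    · have : r σ i ↔ r σ j := ⟨(r.trans · (hA i j h)), (r.trans · (r.symm (hA i j h)))⟩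
      by_cases hi : r σ i <;> simp [hi, ← this]
  · simpa only [aeval_X] using (Commute.all (Lagrange.basis _ E σ) X).map (aeval A)

theorem interpolatedProjection_diagonal (hE : ∀ σ τ, r σ τ → E σ = E τ → σ = τ) (σ : ι) :
    interpolatedProjection r E σ (Matrix.diagonal E) = Matrix.diagonal (Pi.single σ 1) := by
  classical
  have hinj : Set.InjOn E (Finset.univ.filter (r σ)) := fun i hi j hj => by
    simp only [Finset.coe_filter_univ, Set.mem_ofPred_eq] at hi hj
    exact hE i j (r.trans (r.symm hi) hj)
  rw [interpolatedProjection, aeval_diagonal, Matrix.diagonal_mul_diagonal]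
  congr 1
  ext τ
  rcases eq_or_ne σ τ with rfl | hne
  · simp [Lagrange.eval_basis_self hinj ((Finset.mem_filter_univ σ).2 (r.refl σ))]
  by_cases hτ : r σ τ
  · simp [Lagrange.eval_basis_of_ne hne ((Finset.mem_filter_univ τ).2 hτ), hne.symm]
  · simp [hτ, hne.symm]

end Projection

theorem apply_self_eq_zero_of_lie_eq_pow_smul (hE : ∀ σ τ, r σ τ → E σ = E τ → σ = τ)
    (hV : V ∈ blockDiagonalSubalgebra r) {Q : ℝ → Matrix ι ι ℂ} {m : ℕ}
    (hQ : ∀ t : ℝ, ⁅Matrix.diagonal E + t • V, Q t⁆ = t ^ m • B) (σ : ι) : B σ σ = 0 := by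
  let P (t : ℝ) : Matrix ι ι ℂ := interpolatedProjection r E σ (Matrix.diagonal E + t • V)
  have trace_of_ne (t : ℝ) (ht : t ≠ 0) : (P t * B).trace = 0 := by
    have mem : Matrix.diagonal E + t • V ∈ blockDiagonalSubalgebra r :=
      add_mem (diagonal_mem_blockDiagonalSubalgebra r E) (Subalgebra.smul_mem _ hV t)
    have := trace_mul_lie_eq_zero (B := Q t) (commute_interpolatedProjection mem E σ)
    rw [hQ, mul_smul_comm, Matrix.trace_smul] at this
    exact (smul_eq_zero.1 this).resolve_left (pow_ne_zero m ht)
  have continuous : Continuous fun t => (P t * B).trace :=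
    (((continuous_interpolatedProjection r E σ).comp (by fun_prop)).mul
      continuous_const).matrix_trace
  have trace_zero : (P 0 * B).trace = 0 :=
    congrFun (continuous.ext_on (dense_compl_singleton 0) continuous_const trace_of_ne) 0
  simpa [P, interpolatedProjection_diagonal hE, Matrix.trace, Matrix.diagonal_mul,
    Pi.single_apply] using trace_zero

/-- The coefficient of `t ^ (k + 1)` in `⁅diagonal E + t • V, ∑ k, t ^ k • W k⁆`, the current of
the charge with coefficients `W`. -/
def currentCoeff (E : ι → ℂ) (V : Matrix ι ι ℂ) (W : ℕ → Matrix ι ι ℂ) (k : ℕ) : Matrix ι ι ℂ :=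
  ⁅Matrix.diagonal E, W (k + 1)⁆ + ⁅V, W k⁆

/-- The coefficients of the formal power series `O` in `t` that solves
`⁅diagonal E + t • V, O⁆ = ⁅diagonal E + t • V, ∑ k, t ^ k • W k⁆` order by order. -/
noncomputable def transportCoeff (E : ι → ℂ) (V : Matrix ι ι ℂ) (W : ℕ → Matrix ι ι ℂ) :
    ℕ → Matrix ι ι ℂ
  | 0 => 0
  | k + 1 => invAd E (currentCoeff E V W k - ⁅V, transportCoeff E V W k⁆)

theorem transportSource_mem_blockDiagonalSubalgebra (hV : V ∈ blockDiagonalSubalgebra r)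
    (hW : ∀ k, W k ∈ blockDiagonalSubalgebra r) (k : ℕ) :
    currentCoeff E V W k - ⁅V, transportCoeff E V W k⁆ ∈ blockDiagonalSubalgebra r := by
  have mem_current : currentCoeff E V W k ∈ blockDiagonalSubalgebra r :=
    add_mem (lie_mem_blockDiagonalSubalgebra (diagonal_mem_blockDiagonalSubalgebra r E)
      (hW (k + 1))) (lie_mem_blockDiagonalSubalgebra hV (hW k))
  have mem_transport : transportCoeff E V W k ∈ blockDiagonalSubalgebra r := by
    cases k with
    | zero => exact zero_mem _
    | succ k =>
      exact invAd_mem_blockDiagonalSubalgebra E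
        (transportSource_mem_blockDiagonalSubalgebra hV hW k)
  exact sub_mem mem_current (lie_mem_blockDiagonalSubalgebra hV mem_transport)

theorem lie_sum_sub_transportCoeff (hE : ∀ σ τ, r σ τ → E σ = E τ → σ = τ)
    (hV : V ∈ blockDiagonalSubalgebra r) (hW : ∀ k, W k ∈ blockDiagonalSubalgebra r)
    (hW0 : ⁅Matrix.diagonal E, W 0⁆ = 0) (n : ℕ) (t : ℝ) :
    ⁅Matrix.diagonal E + t • V,
        ∑ k ∈ Finset.range (n + 1), t ^ k • (W k - transportCoeff E V W k)⁆ =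
      t ^ (n + 1) • ⁅V, W n - transportCoeff E V W n⁆ := by
  induction n generalizing t with
  | zero => simp [transportCoeff, add_lie, hW0]
  | succ n ih =>
    have source_apply_self (σ : ι) :
        (currentCoeff E V W n - ⁅V, transportCoeff E V W n⁆) σ σ = 0 := by
      have := apply_self_eq_zero_of_lie_eq_pow_smul hE hV ih σ
      rw [lie_sub] at this
      simpa [currentCoeff, lie_diagonal_apply, sub_eq_zero] using this
    have solves : ⁅Matrix.diagonal E, transportCoeff E V W (n + 1)⁆ =
        ⁅Matrix.diagonal E, W (n + 1)⁆ + ⁅V, W n⁆ - ⁅V, transportCoeff E V W n⁆ :=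
      lie_diagonal_invAd hE (transportSource_mem_blockDiagonalSubalgebra hV hW n) source_apply_self
    rw [Finset.sum_range_succ, lie_add, ih, lie_smul, add_lie, lie_sub, lie_sub, solves, smul_lie,
      lie_sub]
    module

theorem schurNorm_transportCoeff_le {δ D M : ℝ} (hδ : 0 < δ) (hδ1 : δ ≤ 1) (hD : 0 ≤ D)
    (hgap : ∀ σ τ, r σ τ → σ ≠ τ → δ ≤ ‖E σ - E τ‖) (hV : V ∈ blockDiagonalSubalgebra r)
    (hW : ∀ k, W k ∈ blockDiagonalSubalgebra r) (hVM : 2 * schurNorm V ≤ M)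
    (hC : ∀ k, schurNorm (currentCoeff E V W k) ≤ D * M ^ (k + 1)) (k : ℕ) :
    schurNorm (transportCoeff E V W k) ≤ D * (2 * M / δ) ^ k := by
  have hM : 0 ≤ M := le_trans (by positivity) hVM
  induction k with
  | zero => simpa [transportCoeff] using hD
  | succ k ih =>
    have source_le : schurNorm (currentCoeff E V W k - ⁅V, transportCoeff E V W k⁆) ≤
        D * M ^ (k + 1) + M * (D * (2 * M / δ) ^ k) := by
      grw [map_sub_le_add, hC, schurNorm_lie_le, hVM, ih]
    have pow_le : M ^ (k + 1) ≤ M * (2 * M / δ) ^ k := by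
      rw [pow_succ']
      gcongr
      exact (le_div_iff₀ hδ).2 (by nlinarith)
    calc schurNorm (transportCoeff E V W (k + 1))
        ≤ δ⁻¹ * schurNorm (currentCoeff E V W k - ⁅V, transportCoeff E V W k⁆) :=
          schurNorm_invAd_le hδ hgap (transportSource_mem_blockDiagonalSubalgebra hV hW k)
      _ ≤ δ⁻¹ * (D * (M * (2 * M / δ) ^ k) + M * (D * (2 * M / δ) ^ k)) := by
          grw [source_le, pow_le]
      _ = D * (2 * M / δ) ^ (k + 1) := by ring

end PerturbationTheory

section Chain

variable {N R : ℕ}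

/-- The sites in the integer interval `[a, b)`; the interval may stick out of the chain. -/
def sites (a b : ℤ) : Set (Fin N) := {j | a ≤ (j : ℤ) ∧ (j : ℤ) < b}

/-- The sites on which the `i`-th term of a range-`R` Hamiltonian acts. -/
abbrev bond (R : ℕ) (i : Fin N) : Set (Fin N) := sites i (i + R)

/-- The `2 * m` sites closest to the cut between the sites `c - 1` and `c`. -/
abbrev zone (c : ℤ) (m : ℕ) : Set (Fin N) := sites (c - m) (c + m)

/-- The sum of the terms to the left of the cut between the sites `c - 1` and `c`. -/
def leftSum {M : Type*} [AddCommMonoid M] (c : ℤ) (a : Fin N → M) : M :=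
  ∑ i ∈ Finset.univ.filter fun i : Fin N => (i : ℤ) < c, a i

theorem sites_subset_sites {a b a' b' : ℤ} (ha : a' ≤ a) (hb : b ≤ b') :
    (sites a b : Set (Fin N)) ⊆ sites a' b' :=
  fun _ hj => ⟨ha.trans hj.1, hj.2.trans_le hb⟩

theorem zone_subset_zone (c : ℤ) {m m' : ℕ} (h : m ≤ m') :
    (zone c m : Set (Fin N)) ⊆ zone c m' :=
  sites_subset_sites (by omega) (by omega)

theorem ncard_sites_le (a b : ℤ) : (sites a b : Set (Fin N)).ncard ≤ (b - a).toNat := by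
  rw [← Int.card_Ico, ← Set.ncard_coe_finset]
  refine Set.ncard_le_ncard_of_injOn (fun j : Fin N => (j : ℤ)) (fun j hj => ?_)
    (fun i _ j _ h => by simpa [Fin.ext_iff] using h) (Finset.finite_toSet _)
  simpa [sites] using hj

theorem ncard_zone_le (c : ℤ) (m : ℕ) : (zone c m : Set (Fin N)).ncard ≤ 2 * m :=
  (ncard_sites_le _ _).trans (by omega)

theorem ncard_bond_le (i : Fin N) : (bond R i).ncard ≤ R :=
  (ncard_sites_le _ _).trans (by omega)

theorem mem_bond_self (hR : 1 ≤ R) (i : Fin N) : i ∈ bond R i := ⟨by omega, by omega⟩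

variable {a b : Fin N → SpinOp N} {c : ℤ} {A : SpinOp N} {m : ℕ}

theorem lie_leftSum_eq (ha : ∀ i, SupportedOn (a i) (bond R i)) (c : ℤ) :
    ⁅∑ i, a i, leftSum c a⁆ =
      ∑ p : Fin N × Fin N with (c ≤ (p.1 : ℤ) ∧ (p.2 : ℤ) < c) ∧ (p.1 : ℤ) < p.2 + R,
        ⁅a p.1, a p.2⁆ := by
  have split : ∑ i, a i = ∑ i ∈ Finset.univ.filter fun i : Fin N => c ≤ (i : ℤ), a i +
      leftSum c a := by
    rw [leftSum, ← Finset.sum_filter_add_sum_filter_not _ (fun i : Fin N => c ≤ (i : ℤ)) a]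
    simp only [not_le]
  rw [← Finset.filter_filter, ← Finset.univ_product_univ, Finset.filter_product
    (fun i : Fin N => c ≤ (i : ℤ)) (fun j : Fin N => (j : ℤ) < c), Finset.sum_filter_of_ne,
    Finset.sum_product, split, add_lie, lie_self, add_zero]
  · rw [sum_lie]
    simp only [leftSum, lie_sum]
  · intro p _ hne
    by_contra hp
    refine hne ((ha _).lie_eq_zero (ha _) (Set.disjoint_left.2 fun j hj hj' => hp ?_))
    exact hj.1.trans_lt hj'.2

theorem supportedOn_lie_leftSum (ha : ∀ i, SupportedOn (a i) (bond R i)) (c : ℤ) :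
    SupportedOn ⁅∑ i, a i, leftSum c a⁆ (zone c (2 * R)) := by
  rw [lie_leftSum_eq ha]
  refine (supportedSubalgebra _).sum_mem fun p hp => ?_
  rw [Finset.mem_filter_univ] at hp
  exact ((ha _).mono (sites_subset_sites (by omega) (by omega))).lie
    ((ha _).mono (sites_subset_sites (by omega) (by omega)))

theorem lie_leftSum_congr (ha : ∀ i, SupportedOn (a i) (bond R i))
    (hb : ∀ i, SupportedOn (b i) (bond R i))
    (hab : ∀ i, bond R i ⊆ zone c (2 * R) → a i = b i) :
    ⁅∑ i, a i, leftSum c a⁆ = ⁅∑ i, b i, leftSum c b⁆ := by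
  rw [lie_leftSum_eq ha, lie_leftSum_eq hb]
  refine Finset.sum_congr rfl fun p hp => ?_
  rw [Finset.mem_filter_univ] at hp
  rw [hab p.1 (sites_subset_sites (by omega) (by omega)),
    hab p.2 (sites_subset_sites (by omega) (by omega))]

theorem leftSum_add (c : ℤ) (a b : Fin N → SpinOp N) :
    leftSum c (a + b) = leftSum c a + leftSum c b :=
  Finset.sum_add_distrib

theorem supportedOn_lie_leftSum_add (ha : ∀ i, SupportedOn (a i) (bond R i))
    (hb : ∀ i, SupportedOn (b i) (bond R i)) (c : ℤ) :
    SupportedOn (⁅∑ i, a i, leftSum c b⁆ + ⁅∑ i, b i, leftSum c a⁆) (zone c (2 * R)) := by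
  have hab (i) : SupportedOn ((a + b) i) (bond R i) := (supportedSubalgebra _).add_mem (ha i) (hb i)
  have polarization : ⁅∑ i, a i, leftSum c b⁆ + ⁅∑ i, b i, leftSum c a⁆ =
      ⁅∑ i, (a + b) i, leftSum c (a + b)⁆ - ⁅∑ i, a i, leftSum c a⁆ - ⁅∑ i, b i, leftSum c b⁆ := by
    simp only [Pi.add_apply, Finset.sum_add_distrib, leftSum_add, add_lie, lie_add]
    abel
  rw [polarization]
  exact sub_mem (sub_mem (mem_supportedSubalgebra.2 (supportedOn_lie_leftSum hab c))
    (supportedOn_lie_leftSum ha c)) (supportedOn_lie_leftSum hb c)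

theorem lie_sum_eq (ha : ∀ i, SupportedOn (a i) (bond R i)) (hA : SupportedOn A (zone c m)) :
    ⁅∑ i, a i, A⁆ =
      ∑ i ∈ Finset.univ.filter fun i : Fin N => c - m < (i : ℤ) + R ∧ (i : ℤ) < c + m,
        ⁅a i, A⁆ := by
  rw [sum_lie, Finset.sum_filter_of_ne fun i _ hne => ?_]
  by_contra hi
  refine hne ((ha i).lie_eq_zero hA (Set.disjoint_left.2 fun j hj hj' => hi ?_))
  exact ⟨hj'.1.trans_lt hj.2, hj.1.trans_lt hj'.2⟩

theorem supportedOn_lie_sum (ha : ∀ i, SupportedOn (a i) (bond R i))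
    (hA : SupportedOn A (zone c m)) : SupportedOn ⁅∑ i, a i, A⁆ (zone c (m + R)) := by
  rw [lie_sum_eq ha hA]
  refine (supportedSubalgebra _).sum_mem fun i hi => ?_
  rw [Finset.mem_filter_univ] at hi
  exact ((ha i).mono (sites_subset_sites (by omega) (by omega))).lie
    (hA.mono (zone_subset_zone c (by omega)))

theorem lie_sum_congr (ha : ∀ i, SupportedOn (a i) (bond R i))
    (hb : ∀ i, SupportedOn (b i) (bond R i)) (hA : SupportedOn A (zone c m))
    (hab : ∀ i, bond R i ⊆ zone c (m + R) → a i = b i) : ⁅∑ i, a i, A⁆ = ⁅∑ i, b i, A⁆ := by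
  rw [lie_sum_eq ha hA, lie_sum_eq hb hA]
  refine Finset.sum_congr rfl fun i hi => ?_
  rw [Finset.mem_filter_univ] at hi
  rw [hab i (sites_subset_sites (by omega) (by omega))]

end Chain

section FieldEnergy

variable {N : ℕ} {h h' : Fin N → ℝ} {σ τ : Fin N → Bool} {S : Set (Fin N)} {δ : ℝ}

/-- The energy of the configuration `σ` in the field `h`. -/
def fieldEnergy (h : Fin N → ℝ) (σ : Fin N → Bool) : ℝ :=
  ∑ i, h i * if σ i then 1 else -1

theorem sum_smul_pauliZ (h : Fin N → ℝ) :
    ∑ i, h i • PauliZ i = Matrix.diagonal fun σ => (fieldEnergy h σ : ℂ) := by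
  ext σ τ
  rcases eq_or_ne σ τ with rfl | hne
  · simp [Matrix.sum_apply, PauliZ, fieldEnergy, apply_ite]
  · simp [Matrix.sum_apply, PauliZ, hne]

theorem fieldEnergy_sub (h : Fin N → ℝ) (σ τ : Fin N → Bool) :
    fieldEnergy h σ - fieldEnergy h τ =
      ∑ i, h i * ((if σ i then 1 else -1) - if τ i then 1 else -1) := by
  simp only [fieldEnergy, ← Finset.sum_sub_distrib, mul_sub]

theorem fieldEnergy_sub_congr (hh : Set.EqOn h h' S) (hστ : Set.EqOn σ τ Sᶜ) :
    fieldEnergy h σ - fieldEnergy h τ = fieldEnergy h' σ - fieldEnergy h' τ := by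
  rw [fieldEnergy_sub, fieldEnergy_sub]
  refine Finset.sum_congr rfl fun i _ => ?_
  by_cases hi : i ∈ S
  · rw [hh hi]
  · rw [hστ hi, sub_self, mul_zero, mul_zero]

theorem SupportedOn.invAd_fieldEnergy {A : SpinOp N} (hA : SupportedOn A S) (h : Fin N → ℝ) :
    SupportedOn (invAd (fun σ => (fieldEnergy h σ : ℂ)) A) S := by
  refine supportedOn_iff.2 ⟨fun σ σ' hne => hA.eqOn_compl (div_ne_zero_iff.1 hne).1,
    fun ρ hρ σ σ' => ?_⟩
  by_cases h0 : A σ σ' = 0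
  · simp only [invAd, Matrix.of_apply, hA.apply_symmDiff hρ, h0, zero_div]
  have energy : fieldEnergy h (σ ∆ ρ) - fieldEnergy h (σ' ∆ ρ) =
      fieldEnergy h σ - fieldEnergy h σ' := by
    rw [fieldEnergy_sub, fieldEnergy_sub]
    refine Finset.sum_congr rfl fun i _ => ?_
    by_cases hi : i ∈ S
    · simp [Pi.symmDiff_apply, hρ hi]
    · simp [Pi.symmDiff_apply, hA.eqOn_compl h0 hi]
  simp only [invAd, Matrix.of_apply, hA.apply_symmDiff hρ, ← Complex.ofReal_sub, energy]

/-- Configurations that differ inside `S` and agree outside have energies at least `δ` apart. -/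
def GapCondition (S : Set (Fin N)) (δ : ℝ) (h : Fin N → ℝ) : Prop :=
  ∀ σ τ, Set.EqOn σ τ Sᶜ → σ ≠ τ → δ ≤ |fieldEnergy h σ - fieldEnergy h τ|

theorem gapCondition_congr (hh : Set.EqOn h h' S) :
    GapCondition S δ h ↔ GapCondition S δ h' :=
  forall₃_congr fun _ _ hστ => by rw [fieldEnergy_sub_congr hh hστ]

theorem gapCondition_empty (δ : ℝ) (h : Fin N → ℝ) : GapCondition ∅ δ h :=
  fun σ τ hστ hne => (hne (by simpa using hστ)).elim

end FieldEnergy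

section Transport

variable {N R : ℕ} {h : Fin N → ℝ} {V : Fin N → SpinOp N} {J : ℝ}

/-- The coefficients in `J` of the part of the Hamiltonian to the left of the cut at `c`. -/
noncomputable def leftCoeff (h : Fin N → ℝ) (V : Fin N → SpinOp N) (c : ℤ) : ℕ → SpinOp N
  | 0 => leftSum c fun i => h i • PauliZ i
  | 1 => leftSum c V
  | _ + 2 => 0

/-- The coefficients in `J` of the operator that transports the energy current through the cut
at `c`. -/
noncomputable def leftTransportCoeff (h : Fin N → ℝ) (V : Fin N → SpinOp N) (c : ℤ) (k : ℕ) :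
    SpinOp N :=
  transportCoeff (fun σ => (fieldEnergy h σ : ℂ)) (∑ i, V i) (leftCoeff h V c) k

theorem supportedOn_smul_pauliZ (hR : 1 ≤ R) (h : Fin N → ℝ) (i : Fin N) :
    SupportedOn (h i • PauliZ i) (bond R i) :=
  (supportedSubalgebra _).smul_mem (SupportedOn.pauliZ (mem_bond_self hR i)) (h i)

theorem supportedOn_currentCoeff (hR : 1 ≤ R) (h : Fin N → ℝ)
    (hV : ∀ i, SupportedOn (V i) (bond R i)) (c : ℤ) (k : ℕ) :
    SupportedOn (currentCoeff (fun σ => (fieldEnergy h σ : ℂ)) (∑ i, V i) (leftCoeff h V c) k)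
      (zone c (2 * R)) := by
  rw [currentCoeff, ← sum_smul_pauliZ]
  match k with
  | 0 => exact supportedOn_lie_leftSum_add (supportedOn_smul_pauliZ hR h) hV c
  | 1 => simpa [leftCoeff] using supportedOn_lie_leftSum hV c
  | k + 2 =>
    simp only [leftCoeff, lie_zero, add_zero]
    exact (supportedSubalgebra _).zero_mem

theorem supportedOn_leftTransportCoeff (hR : 1 ≤ R) (h : Fin N → ℝ)
    (hV : ∀ i, SupportedOn (V i) (bond R i)) (c : ℤ) (k : ℕ) :
    SupportedOn (leftTransportCoeff h V c k) (zone c ((k + 1) * R)) := by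
  induction k with
  | zero => exact (supportedSubalgebra _).zero_mem
  | succ k ih =>
    refine SupportedOn.invAd_fieldEnergy ((supportedSubalgebra _).sub_mem ?_ ?_) h
    · exact (supportedOn_currentCoeff hR h hV c k).mono (zone_subset_zone c (by gcongr; omega))
    · exact (supportedOn_lie_sum hV ih).mono (zone_subset_zone c (by linarith))

end Transport

section Window

variable {N R w n : ℕ} {h : Fin N → ℝ} {V : Fin N → SpinOp N} {c : ℤ} {δ J : ℝ} {S : Set (Fin N)}

/-- The `i`-th term of the Hamiltonian `Ham N J h V`. -/
noncomputable def hamTerm (J : ℝ) (h : Fin N → ℝ) (V : Fin N → SpinOp N) (i : Fin N) : SpinOp N :=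
  h i • PauliZ i + J • V i

/-- The part of the Hamiltonian to the left of the cut between the sites `c - 1` and `c`. -/
noncomputable def hamCut (J : ℝ) (h : Fin N → ℝ) (V : Fin N → SpinOp N) (c : ℤ) : SpinOp N :=
  leftSum c (hamTerm J h V)

theorem ham_eq_diagonal_add (J : ℝ) (h : Fin N → ℝ) (V : Fin N → SpinOp N) :
    Ham N J h V = Matrix.diagonal (fun σ => (fieldEnergy h σ : ℂ)) + J • ∑ i, V i := by
  rw [Ham, Finset.sum_add_distrib, sum_smul_pauliZ, Finset.smul_sum]

theorem sum_pow_smul_leftCoeff (hn : 1 ≤ n) (J : ℝ) (h : Fin N → ℝ) (V : Fin N → SpinOp N)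
    (c : ℤ) : ∑ k ∈ Finset.range (n + 1), J ^ k • leftCoeff h V c k = hamCut J h V c := by
  obtain ⟨m, rfl⟩ := Nat.exists_eq_add_of_le' hn
  simp only [Finset.sum_range_succ', leftCoeff, smul_zero, Finset.sum_const_zero, zero_add,
    pow_one, pow_zero, one_smul, leftSum, Finset.smul_sum, ← Finset.sum_add_distrib, hamCut,
    hamTerm]
  exact Finset.sum_congr rfl fun i _ => add_comm _ _

theorem supportedOn_hamTerm (hR : 1 ≤ R) (hV : ∀ i, SupportedOn (V i) (bond R i)) (J : ℝ)
    (h : Fin N → ℝ) (i : Fin N) : SupportedOn (hamTerm J h V i) (bond R i) :=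
  (supportedSubalgebra _).add_mem (supportedOn_smul_pauliZ hR h i)
    ((supportedSubalgebra _).smul_mem (hV i) J)

/-- The couplings whose support lies in `S`, the other ones being switched off. -/
noncomputable def couplingsIn (R : ℕ) (S : Set (Fin N)) (V : Fin N → SpinOp N) :
    Fin N → SpinOp N :=
  {i | bond R i ⊆ S}.indicator V

theorem couplingsIn_of_subset {i : Fin N} (hi : bond R i ⊆ S) (V : Fin N → SpinOp N) :
    couplingsIn R S V i = V i :=
  Set.indicator_of_mem (by exact hi) V

theorem couplingsIn_of_not_subset {i : Fin N} (hi : ¬bond R i ⊆ S) (V : Fin N → SpinOp N) :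
    couplingsIn R S V i = 0 :=
  Set.indicator_of_notMem (by exact hi) V

theorem SupportedOn.couplingsIn {T : Set (Fin N)} {i : Fin N}
    (hV : bond R i ⊆ S → SupportedOn (V i) T) : SupportedOn (couplingsIn R S V i) T := by
  by_cases hi : bond R i ⊆ S
  · rw [couplingsIn_of_subset hi]
    exact hV hi
  · rw [couplingsIn_of_not_subset hi]
    exact (supportedSubalgebra T).zero_mem

theorem hamTerm_window_eq (hR : 1 ≤ R) {i : Fin N} (hi : bond R i ⊆ S) (J : ℝ) (h : Fin N → ℝ)
    (V : Fin N → SpinOp N) : hamTerm J h V i = hamTerm J (S.indicator h) (couplingsIn R S V) i := by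
  rw [hamTerm, hamTerm, couplingsIn_of_subset hi, Set.indicator_of_mem (hi (mem_bond_self hR i))]

/-- The equivalence of configurations that agree outside `S`. -/
def agreeOutside (S : Set (Fin N)) : Setoid (Fin N → Bool) where
  r σ τ := Set.EqOn σ τ Sᶜ
  iseqv := ⟨fun _ => Set.eqOn_refl _ _, fun h => h.symm, fun h h' => h.trans h'⟩

theorem SupportedOn.mem_blockDiagonalSubalgebra {A : SpinOp N} (hA : SupportedOn A S) :
    A ∈ blockDiagonalSubalgebra (agreeOutside S) :=
  fun _ _ => hA.eqOn_compl

theorem leftCoeff_mem_blockDiagonalSubalgebra (hV : ∀ i, SupportedOn (V i) S) (h : Fin N → ℝ)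
    (c : ℤ) (k : ℕ) : leftCoeff h V c k ∈ blockDiagonalSubalgebra (agreeOutside S) := by
  match k with
  | 0 =>
    rw [leftCoeff, leftSum]
    exact sum_mem fun i _ => Subalgebra.smul_mem _ (diagonal_mem_blockDiagonalSubalgebra _ _) _
  | 1 =>
    rw [leftCoeff, leftSum]
    exact sum_mem fun i _ => (hV i).mem_blockDiagonalSubalgebra
  | _ + 2 => exact zero_mem _

theorem lie_leftCoeff_zero (h : Fin N → ℝ) (V : Fin N → SpinOp N) (c : ℤ) :
    ⁅Matrix.diagonal (fun σ => (fieldEnergy h σ : ℂ)), leftCoeff h V c 0⁆ = 0 := by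
  rw [leftCoeff, leftSum, lie_sum]
  refine Finset.sum_eq_zero fun i _ => ?_
  rw [lie_smul, PauliZ, (Matrix.commute_diagonal _ _).lie_eq, smul_zero]

theorem GapCondition.le_norm_sub (hgap : GapCondition S δ h) (σ τ : Fin N → Bool)
    (hστ : agreeOutside S σ τ) (hne : σ ≠ τ) : δ ≤ ‖(fieldEnergy h σ - fieldEnergy h τ : ℂ)‖ := by
  rw [← Complex.ofReal_sub, Complex.norm_real, Real.norm_eq_abs]
  exact hgap σ τ hστ hne

theorem lie_ham_hamCut_sub_leftTransport (hn : 2 ≤ n) (hδ : 0 < δ)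
    (hV : ∀ i, SupportedOn (V i) S) (hgap : GapCondition S δ h) (J : ℝ) (c : ℤ) :
    ⁅Ham N J h V,
        hamCut J h V c - ∑ k ∈ Finset.range (n + 1), J ^ k • leftTransportCoeff h V c k⁆ =
      -(J ^ (n + 1) • ⁅∑ i, V i, leftTransportCoeff h V c n⁆) := by
  have nondegenerate (σ τ) (hστ : agreeOutside S σ τ)
      (heq : (fieldEnergy h σ : ℂ) = fieldEnergy h τ) : σ = τ := by
    by_contra hne
    have := hgap.le_norm_sub σ τ hστ hne
    rw [heq, sub_self, norm_zero] at this
    exact hδ.not_ge this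
  have perturbative := lie_sum_sub_transportCoeff nondegenerate
    (sum_mem fun i (_ : i ∈ Finset.univ) => (hV i).mem_blockDiagonalSubalgebra)
    (leftCoeff_mem_blockDiagonalSubalgebra hV h c) (lie_leftCoeff_zero h V c) n J
  simp only [smul_sub, Finset.sum_sub_distrib, sum_pow_smul_leftCoeff (one_le_two.trans hn),
    ← ham_eq_diagonal_add] at perturbative
  obtain ⟨m, rfl⟩ := Nat.exists_eq_add_of_le' hn
  refine perturbative.trans ?_
  rw [leftCoeff, zero_sub, lie_neg, smul_neg]
  rfl

/-- The `k`-th coefficient of the transport operator at the cut `c`, computed from the fields and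
couplings within distance `w` of the cut. -/
noncomputable def windowTransportCoeff (R : ℕ) (h : Fin N → ℝ) (V : Fin N → SpinOp N) (c : ℤ)
    (w k : ℕ) : SpinOp N :=
  leftTransportCoeff ((zone c w).indicator h) (couplingsIn R (zone c w) V) c k

/-- The transport operator at the cut `c`, truncated at order `n`. -/
noncomputable def windowTransport (R : ℕ) (J : ℝ) (h : Fin N → ℝ) (V : Fin N → SpinOp N) (c : ℤ)
    (w n : ℕ) : SpinOp N :=
  ∑ k ∈ Finset.range (n + 1), J ^ k • windowTransportCoeff R h V c w k

theorem supportedOn_windowTransport (hR : 1 ≤ R) (hV : ∀ i, SupportedOn (V i) (bond R i)) (J : ℝ)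
    (h : Fin N → ℝ) (c : ℤ) (w n : ℕ) :
    SupportedOn (windowTransport R J h V c w n) (zone c ((n + 1) * R)) := by
  refine (supportedSubalgebra _).sum_mem fun k hk => (supportedSubalgebra _).smul_mem ?_ _
  have hkn : k + 1 ≤ n + 1 := Finset.mem_range.1 hk
  exact (supportedOn_leftTransportCoeff hR _ (fun i => .couplingsIn fun _ => hV i) c k).mono
    (zone_subset_zone c (by gcongr))

theorem lie_ham_hamCut_sub_windowTransport (hR : 1 ≤ R) (hn : 2 ≤ n) (hw : (n + 2) * R ≤ w)
    (hδ : 0 < δ) (hV : ∀ i, SupportedOn (V i) (bond R i)) (hgap : GapCondition (zone c w) δ h) :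
    ⁅Ham N J h V, hamCut J h V c - windowTransport R J h V c w n⁆ =
      -(J ^ (n + 1) • ⁅∑ i, couplingsIn R (zone c w) V i, windowTransportCoeff R h V c w n⁆) := by
  set h' := (zone c w).indicator h
  set V' := couplingsIn R (zone c w) V
  have hV'_bond (i) : SupportedOn (V' i) (bond R i) := .couplingsIn fun _ => hV i
  have hV'_zone (i) : SupportedOn (V' i) (zone c w) := .couplingsIn (hV i).mono
  have terms_eq {m : ℕ} (hm : m ≤ w) (i : Fin N) (hi : bond R i ⊆ zone c m) :
      hamTerm J h V i = hamTerm J h' V' i :=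
    hamTerm_window_eq hR (hi.trans (zone_subset_zone c hm)) J h V
  have ham_lie_cut : ⁅Ham N J h V, hamCut J h V c⁆ = ⁅Ham N J h' V', hamCut J h' V' c⁆ :=
    lie_leftSum_congr (supportedOn_hamTerm hR hV J h) (supportedOn_hamTerm hR hV'_bond J h')
      (terms_eq (by nlinarith))
  have ham_lie_transport : ⁅Ham N J h V, windowTransport R J h V c w n⁆ =
      ⁅Ham N J h' V', windowTransport R J h V c w n⁆ :=
    lie_sum_congr (supportedOn_hamTerm hR hV J h) (supportedOn_hamTerm hR hV'_bond J h')
      (supportedOn_windowTransport hR hV J h c w n) (terms_eq (by linarith))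
  rw [lie_sub, ham_lie_cut, ham_lie_transport, ← lie_sub]
  exact lie_ham_hamCut_sub_leftTransport hn hδ hV'_zone
    ((gapCondition_congr Set.eqOn_indicator).2 hgap) J c

end Window

section Bounds

variable {N R w n : ℕ} {h : Fin N → ℝ} {V : Fin N → SpinOp N} {c : ℤ} {δ J s v : ℝ}
  {S : Set (Fin N)}

theorem schurNorm_sum_le_ncard_mul {a : Fin N → SpinOp N} {C : ℝ} (ha : ∀ i ∉ S, a i = 0)
    (hC : ∀ i, schurNorm (a i) ≤ C) (hC0 : 0 ≤ C) (t : Finset (Fin N)) :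
    schurNorm (∑ i ∈ t, a i) ≤ S.ncard * C := by
  classical
  rw [← Finset.sum_filter_of_ne fun i _ hne => not_imp_comm.1 (ha i) hne, ← nsmul_eq_mul]
  refine (Finset.le_sum_of_subadditive schurNorm (map_zero _).le (map_add_le_add _) _ _).trans ?_
  refine (Finset.sum_le_card_nsmul _ _ C fun i _ => hC i).trans (nsmul_le_nsmul_left hC0 ?_)
  rw [← Set.ncard_coe_finset]
  exact Set.ncard_le_ncard fun i hi => (Finset.mem_filter.1 hi).2

theorem schurNorm_pauliZ_le (i : Fin N) : schurNorm (PauliZ i) ≤ 1 :=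
  schurNorm_diagonal_le zero_le_one fun σ => by split_ifs <;> simp

theorem schurNorm_currentCoeff_le (hs : 1 ≤ s) (hSs : S.ncard ≤ s) (hv : 0 ≤ v)
    (hh : ∀ i, |h i| ≤ 1) (hhS : ∀ i ∉ S, h i = 0) (hV : ∀ i, schurNorm (V i) ≤ v)
    (hVS : ∀ i ∉ S, V i = 0) (k : ℕ) :
    schurNorm (currentCoeff (fun σ => (fieldEnergy h σ : ℂ)) (∑ i, V i) (leftCoeff h V c) k) ≤
      2 * s * (2 * (s * v)) ^ (k + 1) := by
  have field_le (t : Finset (Fin N)) : schurNorm (∑ i ∈ t, h i • PauliZ i) ≤ s := by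
    refine (schurNorm_sum_le_ncard_mul (fun i hi => ?_) (fun i => ?_) zero_le_one t).trans
      (by rwa [mul_one])
    · rw [hhS i hi, zero_smul]
    · rw [map_smul_eq_mul]
      exact mul_le_one₀ (hh i) (apply_nonneg _ _) (schurNorm_pauliZ_le i)
  have coupling_le (t : Finset (Fin N)) : schurNorm (∑ i ∈ t, V i) ≤ s * v := by
    grw [schurNorm_sum_le_ncard_mul hVS hV hv t, hSs]
  rw [currentCoeff, ← sum_smul_pauliZ]
  match k with
  | 0 =>
    grw [map_add_le_add, schurNorm_lie_le, schurNorm_lie_le, leftCoeff, leftCoeff, leftSum, leftSum,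
      field_le, field_le, coupling_le, coupling_le]
    rw [zero_add, pow_one]
    linarith
  | 1 =>
    rw [leftCoeff, leftCoeff, lie_zero, zero_add, leftSum]
    grw [schurNorm_lie_le, coupling_le, coupling_le]
    rw [one_add_one_eq_two]
    nlinarith [sq_nonneg (s * v), le_mul_of_one_le_left (sq_nonneg (s * v)) hs]
  | k + 2 =>
    rw [leftCoeff, leftCoeff, lie_zero, lie_zero, add_zero, map_zero]
    positivity

theorem schurNorm_leftTransportCoeff_le (hδ : 0 < δ) (hδ1 : δ ≤ 1) (hs : 1 ≤ s)
    (hSs : S.ncard ≤ s) (hv : 0 ≤ v) (hh : ∀ i, |h i| ≤ 1) (hhS : ∀ i ∉ S, h i = 0)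
    (hV : ∀ i, schurNorm (V i) ≤ v) (hVS : ∀ i ∉ S, V i = 0) (hVS' : ∀ i, SupportedOn (V i) S)
    (hgap : GapCondition S δ h) (k : ℕ) :
    schurNorm (leftTransportCoeff h V c k) ≤ 2 * s * (2 * (2 * (s * v)) / δ) ^ k := by
  refine schurNorm_transportCoeff_le hδ hδ1 (by positivity) hgap.le_norm_sub
    (sum_mem fun i _ => (hVS' i).mem_blockDiagonalSubalgebra)
    (leftCoeff_mem_blockDiagonalSubalgebra hVS' h c) ?_
    (schurNorm_currentCoeff_le hs hSs hv hh hhS hV hVS) k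
  grw [schurNorm_sum_le_ncard_mul hVS hV hv, hSs]

theorem schurNorm_le_of_bond (hV : ∀ i, SupportedOn (V i) (bond R i)) (hV1 : ∀ i, opNorm (V i) ≤ 1)
    (i : Fin N) : schurNorm (V i) ≤ 2 ^ R := by
  grw [(hV i).schurNorm_le, hV1 i, mul_one]
  exact pow_le_pow_right₀ one_le_two (ncard_bond_le i)

theorem schurNorm_couplingsIn_le (hV : ∀ i, SupportedOn (V i) (bond R i))
    (hV1 : ∀ i, opNorm (V i) ≤ 1) (i : Fin N) : schurNorm (couplingsIn R S V i) ≤ 2 ^ R := by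
  by_cases hi : bond R i ⊆ S
  · rw [couplingsIn_of_subset hi]
    exact schurNorm_le_of_bond hV hV1 i
  · rw [couplingsIn_of_not_subset hi, map_zero]
    positivity

theorem couplingsIn_of_notMem (hR : 1 ≤ R) {i : Fin N} (hi : i ∉ S) : couplingsIn R S V i = 0 :=
  couplingsIn_of_not_subset (fun hS => hi (hS (mem_bond_self hR i))) V

/-- The ratio between successive terms of the perturbation expansion in a window of half-width
`w` with gap `δ`. -/
noncomputable def expansionRatio (R w : ℕ) (δ J : ℝ) : ℝ :=
  8 * w * 2 ^ R * J / δ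

theorem expansionRatio_nonneg (hδ : 0 ≤ δ) (hJ : 0 ≤ J) : 0 ≤ expansionRatio R w δ J := by
  unfold expansionRatio
  positivity

section

variable (hR : 1 ≤ R) (hw : 1 ≤ w) (hδ : 0 < δ) (hδ1 : δ ≤ 1) (hJ : 0 ≤ J)
  (hV : ∀ i, SupportedOn (V i) (bond R i)) (hV1 : ∀ i, opNorm (V i) ≤ 1) (hh : ∀ i, |h i| ≤ 1)
  (hgap : GapCondition (zone c w) δ h)
include hR hw hδ hδ1 hJ hV hV1 hh hgap

theorem schurNorm_windowTransportCoeff_le (k : ℕ) :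
    J ^ k * schurNorm (windowTransportCoeff R h V c w k) ≤
      4 * w * expansionRatio R w δ J ^ k := by
  have field_le (i) : |(zone c w).indicator h i| ≤ 1 :=
    (norm_indicator_le_norm_self h i).trans (hh i)
  have coeff_le := schurNorm_leftTransportCoeff_le (c := c) (s := 2 * w) hδ hδ1
    (by exact_mod_cast (by omega : 1 ≤ 2 * w)) (by exact_mod_cast ncard_zone_le c w)
    (by positivity) field_le (fun i hi => Set.indicator_of_notMem hi h)
    (schurNorm_couplingsIn_le hV hV1) (fun i hi => couplingsIn_of_notMem hR hi)
    (fun i => .couplingsIn (hV i).mono) ((gapCondition_congr Set.eqOn_indicator).2 hgap) k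
  calc J ^ k * schurNorm (windowTransportCoeff R h V c w k)
      ≤ J ^ k * (2 * (2 * w) * (2 * (2 * (2 * w * 2 ^ R)) / δ) ^ k) := by
        gcongr
        exact coeff_le
    _ = 4 * w * expansionRatio R w δ J ^ k := by
        rw [expansionRatio, mul_left_comm, ← mul_pow]
        ring

theorem opNorm_windowTransport_le (hx : expansionRatio R w δ J ≤ 1 / 2) (n : ℕ) :
    opNorm (windowTransport R J h V c w n) ≤ 8 * w * expansionRatio R w δ J := by
  set x := expansionRatio R w δ J
  have hx0 : 0 ≤ x := expansionRatio_nonneg hδ.le hJ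
  have zeroth : windowTransportCoeff R h V c w 0 = 0 := rfl
  rw [windowTransport, Finset.sum_range_succ', zeroth, smul_zero, add_zero]
  calc opNorm (∑ k ∈ Finset.range n, J ^ (k + 1) • windowTransportCoeff R h V c w (k + 1))
      ≤ ∑ k ∈ Finset.range n, 4 * w * x ^ (k + 1) := by
        refine (opNorm_sum_le _ _).trans (Finset.sum_le_sum fun k _ => ?_)
        grw [opNorm_le_schurNorm, map_smul_eq_mul, Real.norm_of_nonneg (by positivity),
          schurNorm_windowTransportCoeff_le hR hw hδ hδ1 hJ hV hV1 hh hgap]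
    _ = 4 * w * x * ∑ k ∈ Finset.range n, x ^ k := by
        rw [Finset.mul_sum]
        exact Finset.sum_congr rfl fun k _ => by ring
    _ ≤ 4 * w * x * ∑ k ∈ Finset.range n, (1 / 2) ^ k := by gcongr
    _ ≤ 8 * w * x := by
        grw [sum_geometric_two_le]
        linarith

theorem opNorm_lie_ham_hamCut_sub_windowTransport_le (hn : 2 ≤ n) (hwn : (n + 2) * R ≤ w) :
    opNorm ⁅Ham N J h V, hamCut J h V c - windowTransport R J h V c w n⁆ ≤
      4 * w * expansionRatio R w δ J ^ (n + 1) := by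
  have coupling_le : schurNorm (∑ i, couplingsIn R (zone c w) V i) ≤ 2 * w * 2 ^ R := by
    grw [schurNorm_sum_le_ncard_mul (fun i hi => couplingsIn_of_notMem hR hi)
      (schurNorm_couplingsIn_le hV hV1) (by positivity), ncard_zone_le]
    exact_mod_cast le_rfl
  have transport_le := schurNorm_windowTransportCoeff_le hR hw hδ hδ1 hJ hV hV1 hh hgap n
  rw [lie_ham_hamCut_sub_windowTransport hR hn hwn hδ hV hgap]
  grw [opNorm_le_schurNorm, map_neg_eq_map, map_smul_eq_mul, Real.norm_of_nonneg (by positivity),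
    schurNorm_lie_le, coupling_le]
  calc J ^ (n + 1) * (2 * (2 * w * 2 ^ R) * schurNorm (windowTransportCoeff R h V c w n))
      = 4 * w * 2 ^ R * J * (J ^ n * schurNorm (windowTransportCoeff R h V c w n)) := by ring
    _ ≤ expansionRatio R w δ J * (4 * w * expansionRatio R w δ J ^ n) := by
        refine mul_le_mul ((le_div_iff₀ hδ).2 ?_) transport_le
          (mul_nonneg (by positivity) (apply_nonneg _ _)) (expansionRatio_nonneg hδ.le hJ)
        have : 0 ≤ w * 2 ^ R * J := by positivity
        nlinarith
    _ = 4 * w * expansionRatio R w δ J ^ (n + 1) := by ring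

end

theorem opNorm_hamTerm_le (hJ : 0 ≤ J) (hJ1 : J ≤ 1) (hV1 : ∀ i, opNorm (V i) ≤ 1)
    (hh : ∀ i, |h i| ≤ 1) (i : Fin N) : opNorm (hamTerm J h V i) ≤ 2 := by
  rw [hamTerm, ← Complex.coe_smul, ← Complex.coe_smul]
  grw [opNorm_add_le, opNorm_smul, opNorm_smul, Complex.norm_real, Complex.norm_real,
    opNorm_le_schurNorm (PauliZ i), schurNorm_pauliZ_le, hV1, Real.norm_eq_abs, hh,
    Real.norm_of_nonneg hJ, hJ1]
  norm_num

theorem opNorm_hamCut_sub_hamCut_le (hJ : 0 ≤ J) (hJ1 : J ≤ 1) (hV1 : ∀ i, opNorm (V i) ≤ 1)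
    (hh : ∀ i, |h i| ≤ 1) (c : ℤ) (m : ℕ) :
    opNorm (hamCut J h V c - hamCut J h V (c - m)) ≤ 2 * m := by
  classical
  have subset : (Finset.univ.filter fun i : Fin N => (i : ℤ) < c - m) ⊆
      Finset.univ.filter fun i : Fin N => (i : ℤ) < c :=
    Finset.monotone_filter_right _ fun i _ hi => hi.trans_le (by omega)
  rw [hamCut, hamCut, leftSum, leftSum, ← Finset.sum_sdiff_eq_sub subset]
  refine (opNorm_sum_le _ _).trans
    ((Finset.sum_le_card_nsmul _ _ 2 fun i _ => opNorm_hamTerm_le hJ hJ1 hV1 hh i).trans ?_)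
  rw [nsmul_eq_mul, mul_comm]
  gcongr
  rw [← Set.ncard_coe_finset]
  refine (Set.ncard_le_ncard (t := sites (c - m) c) fun i hi => ?_).trans
    ((ncard_sites_le _ _).trans (by omega))
  simpa [sites, and_comm] using hi

end Bounds

section Measurability

variable {Ω ι : Type*} [MeasurableSpace Ω] {A B : Ω → Matrix ι ι ℂ} {E : Ω → ι → ℂ}

theorem measurable_lie_apply [Fintype ι] (hA : ∀ i j, Measurable fun ω => A ω i j)
    (hB : ∀ i j, Measurable fun ω => B ω i j) (i j : ι) : Measurable fun ω => ⁅A ω, B ω⁆ i j := by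
  simp only [Ring.lie_def, Matrix.sub_apply, Matrix.mul_apply]
  exact (Finset.measurable_fun_sum _ fun k _ => (hA i k).mul (hB k j)).sub
    (Finset.measurable_fun_sum _ fun k _ => (hB i k).mul (hA k j))

theorem measurable_diagonal_apply [DecidableEq ι] (hE : ∀ i, Measurable fun ω => E ω i) (i j : ι) :
    Measurable fun ω => Matrix.diagonal (E ω) i j := by
  simp only [Matrix.diagonal_apply]
  split_ifs
  exacts [hE i, measurable_const]

theorem measurable_transportCoeff_apply [Fintype ι] [DecidableEq ι]
    (hE : ∀ i, Measurable fun ω => E ω i) (V : Matrix ι ι ℂ) {W : Ω → ℕ → Matrix ι ι ℂ}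
    (hW : ∀ k i j, Measurable fun ω => W ω k i j) (k : ℕ) (i j : ι) :
    Measurable fun ω => transportCoeff (E ω) V (W ω) k i j := by
  have hV (i j) : Measurable fun _ : Ω => V i j := measurable_const
  induction k generalizing i j with
  | zero => exact measurable_const
  | succ k ih =>
    have current : Measurable fun ω => currentCoeff (E ω) V (W ω) k i j :=
      (measurable_lie_apply (measurable_diagonal_apply hE) (hW (k + 1)) i j).add
        (measurable_lie_apply hV (hW k) i j)
    exact (current.sub (measurable_lie_apply hV ih i j)).div ((hE i).sub (hE j))

variable {N : ℕ} {f : Ω → Fin N → ℝ}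

theorem measurable_fieldEnergy (hf : Measurable f) (σ : Fin N → Bool) :
    Measurable fun ω => fieldEnergy (f ω) σ :=
  Finset.measurable_fun_sum _ fun i _ => (hf.eval (a := i)).mul_const _

theorem measurable_leftCoeff_apply (hf : Measurable f) (V : Fin N → SpinOp N) (c : ℤ) (k : ℕ)
    (σ τ : Fin N → Bool) : Measurable fun ω => leftCoeff (f ω) V c k σ τ := by
  match k with
  | 0 =>
    simp only [leftCoeff, leftSum, Matrix.sum_apply]
    exact Finset.measurable_fun_sum _ fun i _ => (hf.eval (a := i)).smul_const _
  | 1 => exact measurable_const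
  | _ + 2 => exact measurable_const

theorem measurable_windowTransport_apply (R : ℕ) (J : ℝ) (V : Fin N → SpinOp N) (c : ℤ) (w n : ℕ)
    (σ τ : Fin N → Bool) : Measurable fun h => windowTransport R J h V c w n σ τ := by
  have field : Measurable ((zone c w).indicator : (Fin N → ℝ) → Fin N → ℝ) :=
    measurable_pi_lambda _ fun i => by
      classical
      simp only [Set.indicator_apply]
      split_ifs
      exacts [measurable_pi_apply i, measurable_const]
  have energy (σ) : Measurable fun h => (fieldEnergy ((zone c w).indicator h) σ : ℂ) :=
    Complex.measurable_ofReal.comp (measurable_fieldEnergy field σ)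
  simp only [windowTransport, Matrix.sum_apply, Matrix.smul_apply]
  exact Finset.measurable_fun_sum _ fun k _ => (measurable_transportCoeff_apply energy _
    (measurable_leftCoeff_apply field _ c) k σ τ).const_smul (J ^ k)

theorem measurable_hamCut_apply (J : ℝ) (V : Fin N → SpinOp N) (c : ℤ) (σ τ : Fin N → Bool) :
    Measurable fun h => hamCut J h V c σ τ := by
  simp only [hamCut, leftSum, hamTerm, Matrix.sum_apply, Matrix.add_apply, Matrix.smul_apply]
  exact Finset.measurable_fun_sum _ fun i _ =>
    ((measurable_pi_apply i).smul_const _).add_const _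

theorem measurableSet_gapCondition (S : Set (Fin N)) (δ : ℝ) :
    MeasurableSet {h | GapCondition S δ h} := by
  simp only [GapCondition, Set.ofPred_forall]
  exact MeasurableSet.iInter fun σ => MeasurableSet.iInter fun τ => MeasurableSet.iInter fun _ =>
    MeasurableSet.iInter fun _ => measurableSet_le measurable_const
      ((measurable_fieldEnergy measurable_id σ).sub (measurable_fieldEnergy measurable_id τ)).norm

end Measurability

section ProductMeasure

open ProbabilityTheory
open scoped ENNReal

variable {ι : Type*} [Fintype ι] {X : ι → Type*} [∀ i, MeasurableSpace (X i)]
  {μ : ∀ i, Measure (X i)} [∀ i, IsProbabilityMeasure (μ i)]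

theorem measure_pi_le_of_forall_update_le [DecidableEq ι] {A : Set (∀ i, X i)}
    (hA : MeasurableSet A) (i : ι) {c : ℝ≥0∞}
    (hc : ∀ x, μ i {t | Function.update x i t ∈ A} ≤ c) : Measure.pi μ A ≤ c := by
  calc Measure.pi μ A = ∫⁻ x, A.indicator 1 x ∂Measure.pi μ := (lintegral_indicator_one hA).symm
    _ ≤ ∫⁻ _, c ∂Measure.pi μ := by
        refine lintegral_le_of_lmarginal_le {i} (measurable_one.indicator hA) measurable_const
          fun x => ?_
        rw [lmarginal_singleton, lmarginal_singleton, lintegral_const, measure_univ, mul_one]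
        refine le_of_eq_of_le ?_ (hc x)
        exact lintegral_indicator_one (measurable_update x hA)
    _ = c := by simp

theorem measure_pi_inter_eq_mul_of_dependsOn {S T : Set ι} (hST : Disjoint S T)
    {A B : Set (∀ i, X i)} (hA : MeasurableSet A) (hB : MeasurableSet B)
    (hAS : DependsOn (· ∈ A) S) (hBT : DependsOn (· ∈ B) T) :
    Measure.pi μ (A ∩ B) = Measure.pi μ A * Measure.pi μ B := by
  classical
  obtain ⟨x₀⟩ : Nonempty (∀ i, X i) := (Measure.pi μ).nonempty_of_neZero
  let extend (U : Finset ι) (y : ∀ i : U, X i) (j : ι) : X j :=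
    if hj : j ∈ U then y ⟨j, hj⟩ else x₀ j
  have measurable_extend (U) : Measurable (extend U) := measurable_pi_lambda _ fun j => by
    simp only [extend]
    split_ifs
    exacts [measurable_pi_apply _, measurable_const]
  have preimage_extend (U : Finset ι) {C : Set (∀ i, X i)} (hC : DependsOn (· ∈ C) (U : Set ι)) :
      (fun (x : ∀ i, X i) (i : U) => x i) ⁻¹' (extend U ⁻¹' C) = C :=
    Set.ext fun x => (hC fun j hj => by simp [extend, Finset.mem_coe.1 hj]).to_iff
  have indep : iIndepFun (fun (i : ι) (x : ∀ i, X i) => x i) (Measure.pi μ) :=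
    iIndepFun_pi (X := fun _ => id) fun _ => aemeasurable_id
  have := (indep.indepFun_finset S.toFinset T.toFinset (by simpa using hST)
    fun i => measurable_pi_apply i).measure_inter_preimage_eq_mul _ _
      (measurable_extend _ hA) (measurable_extend _ hB)
  rwa [preimage_extend _ (by simpa using hAS), preimage_extend _ (by simpa using hBT)] at this

theorem measure_pi_biInter_le_pow_of_dependsOn {κ : Type*} {A : κ → Set (∀ i, X i)}
    {S : κ → Set ι} (hS : Pairwise fun q r => Disjoint (S q) (S r))
    (hA : ∀ q, MeasurableSet (A q)) (hAS : ∀ q, DependsOn (· ∈ A q) (S q)) {p : ℝ≥0∞}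
    (hp : ∀ q, Measure.pi μ (A q) ≤ p) (s : Finset κ) :
    Measure.pi μ (⋂ q ∈ s, A q) ≤ p ^ s.card := by
  classical
  induction s using Finset.induction_on with
  | empty => simp
  | insert r s hr ih =>
    have depends : DependsOn (· ∈ ⋂ q ∈ s, A q) (⋃ q ∈ s, S q) := fun x y hxy => by
      simp only [Set.mem_iInter, eq_iff_iff]
      exact forall₂_congr fun q hq => (hAS q fun i hi => hxy i (Set.mem_biUnion hq hi)).to_iff
    have disjoint : Disjoint (S r) (⋃ q ∈ s, S q) :=
      Set.disjoint_iUnion₂_right.2 fun q hq => hS (ne_of_mem_of_not_mem hq hr).symm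
    rw [Finset.set_biInter_insert, Finset.card_insert_of_notMem hr, pow_succ',
      measure_pi_inter_eq_mul_of_dependsOn disjoint (hA r)
        (s.measurableSet_biInter fun q _ => hA q) (hAS r) depends]
    exact mul_le_mul' (hp r) ih

end ProductMeasure

section Anticoncentration

theorem volume_abs_mul_add_lt {a : ℝ} (ha : a ≠ 0) (b δ : ℝ) :
    volume {t : ℝ | |t * a + b| < δ} = ENNReal.ofReal (2 * (δ / |a|)) := by
  rw [← Real.volume_ball (-b / a)]
  congr 1
  ext t
  have factor : t * a + b = (t - -b / a) * a := by field_simp; ring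
  rw [Set.mem_ofPred_eq, factor, abs_mul, Metric.mem_ball, Real.dist_eq,
    lt_div_iff₀ (abs_pos.2 ha)]

theorem measure_pi_abs_sum_mul_lt_le {ι : Type*} [Fintype ι] {μ : ι → Measure ℝ}
    [∀ i, IsProbabilityMeasure (μ i)] (hμ : ∀ i, μ i ≤ volume) {m : ι → ℝ} {i : ι} (hi : m i ≠ 0)
    (δ : ℝ) : Measure.pi μ {x | |∑ j, x j * m j| < δ} ≤ ENNReal.ofReal (2 * (δ / |m i|)) := by
  classical
  refine measure_pi_le_of_forall_update_le (measurableSet_lt (by fun_prop) measurable_const) i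
    fun x => ?_
  have sum_update (t : ℝ) : ∑ j, Function.update x i t j * m j =
      t * m i + ∑ j ∈ Finset.univ.erase i, x j * m j := by
    rw [← Finset.add_sum_erase _ _ (Finset.mem_univ i), Function.update_self]
    exact congrArg _ (Finset.sum_congr rfl fun j hj => by
      rw [Function.update_of_ne (Finset.ne_of_mem_erase hj)])
  simp only [Set.mem_ofPred_eq, sum_update]
  exact (hμ i _).trans_eq (volume_abs_mul_add_lt hi _ δ)

end Anticoncentration

section GapProbability

open scoped ENNReal

variable {N : ℕ} {μ : Fin N → Measure ℝ} [∀ i, IsProbabilityMeasure (μ i)]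

theorem exists_abs_sum_lt_of_not_gapCondition {S : Set (Fin N)} {δ : ℝ} {h : Fin N → ℝ}
    (hgap : ¬GapCondition S δ h) : ∃ m : Fin N → ℝ, m ≠ 0 ∧ (∀ i ∈ S, m i ∈ ({-2, 0, 2} : Set ℝ)) ∧
      (∀ i ∉ S, m i = 0) ∧ |∑ i, h i * m i| < δ := by
  simp only [GapCondition, not_forall, not_le] at hgap
  obtain ⟨σ, τ, hστ, hne, hlt⟩ := hgap
  obtain ⟨i, hi⟩ := Function.ne_iff.1 hne
  refine ⟨fun i => (if σ i then 1 else -1) - if τ i then 1 else -1,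
    Function.ne_iff.2 ⟨i, ?_⟩, fun j _ => ?_, fun j hj => ?_, by rwa [← fieldEnergy_sub]⟩
  · revert hi
    cases σ i <;> cases τ i <;> norm_num
  · beta_reduce
    cases σ j <;> cases τ j <;> norm_num
  · simp only [hστ hj, sub_self]

theorem measure_pi_not_gapCondition_le (hμ : ∀ i, μ i ≤ volume) (S : Set (Fin N)) (δ : ℝ) :
    Measure.pi μ {h | ¬GapCondition S δ h} ≤ 3 ^ S.ncard * ENNReal.ofReal δ := by
  classical
  let flips (i : Fin N) : Finset ℝ := if i ∈ S then {-2, 0, 2} else {0}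
  have card_flips_le : (Fintype.piFinset flips).card ≤ 3 ^ S.ncard := by
    calc (Fintype.piFinset flips).card = ∏ i, (flips i).card := Fintype.card_piFinset _
      _ ≤ ∏ i, if i ∈ S then 3 else 1 := Finset.prod_le_prod' fun i _ => by
          simp only [flips]
          split_ifs
          exacts [Finset.card_le_three, le_rfl]
      _ = 3 ^ S.ncard := by
          rw [Set.ncard_eq_toFinset_card', ← Finset.prod_const, ← Finset.prod_filter,
            Set.filter_mem_univ_eq_toFinset]
  have resonances : {h | ¬GapCondition S δ h} ⊆
      ⋃ m ∈ (Fintype.piFinset flips).filter (· ≠ 0), {h | |∑ i, h i * m i| < δ} := by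
    intro h hh
    obtain ⟨m, hm0, hmS, hm, hlt⟩ := exists_abs_sum_lt_of_not_gapCondition hh
    refine Set.mem_biUnion (Finset.mem_filter.2 ⟨Fintype.mem_piFinset.2 fun i => ?_, hm0⟩) hlt
    by_cases hi : i ∈ S
    · simpa [flips, hi] using hmS i hi
    · simp [flips, hi, hm i hi]
  have resonance_le : ∀ m ∈ (Fintype.piFinset flips).filter (· ≠ 0),
      Measure.pi μ {h | |∑ i, h i * m i| < δ} ≤ ENNReal.ofReal δ := by
    intro m hm
    obtain ⟨i, hi⟩ := Function.ne_iff.1 (Finset.mem_filter.1 hm).2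
    have abs_eq : |m i| = 2 := by
      have := Fintype.mem_piFinset.1 (Finset.mem_filter.1 hm).1 i
      simp only [flips] at this
      split_ifs at this <;> aesop
    refine (measure_pi_abs_sum_mul_lt_le hμ hi δ).trans_eq ?_
    rw [abs_eq, mul_div_cancel₀ _ two_ne_zero]
  grw [resonances, measure_biUnion_finset_le, Finset.sum_le_card_nsmul _ _ _ resonance_le,
    nsmul_eq_mul, Finset.card_filter_le, card_flips_le]
  norm_cast

end GapProbability

section CutSelection

open scoped ENNReal

variable {N R w n : ℕ} {b : ℤ} {δ J : ℝ} {h : Fin N → ℝ} {V : Fin N → SpinOp N}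

/-- The `q`-th candidate cut to the left of `b`; the zones of half-width `w` around distinct
candidates are disjoint. -/
def candidateCut (b : ℤ) (w q : ℕ) : ℤ := b - (2 * w * q : ℕ)

/-- The index of the first candidate cut whose zone satisfies the gap condition. -/
noncomputable def firstGap (b : ℤ) (w : ℕ) (δ : ℝ) (h : Fin N → ℝ) : ℕ :=
  sInf {q | GapCondition (zone (candidateCut b w q) w) δ h}

/-- The energy between the `q`-th candidate cut and `b`, plus the transport through that cut. -/
noncomputable def transportTo (R : ℕ) (J : ℝ) (h : Fin N → ℝ) (V : Fin N → SpinOp N) (b : ℤ)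
    (w n q : ℕ) : SpinOp N :=
  hamCut J h V b - hamCut J h V (candidateCut b w q) +
    windowTransport R J h V (candidateCut b w q) w n

theorem disjoint_zone_candidateCut (b : ℤ) (w : ℕ) :
    Pairwise fun q r => Disjoint (zone (candidateCut b w q) w : Set (Fin N))
      (zone (candidateCut b w r) w) := by
  refine (pairwise_disjoint_on _).2 fun q r hqr => Set.disjoint_left.2 fun j hq hr => ?_
  have : 2 * w * (q + 1) ≤ 2 * w * r := Nat.mul_le_mul_left _ hqr
  simp only [sites, candidateCut, Set.mem_ofPred_eq] at hq hr
  grind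

theorem exists_gapCondition_candidateCut (hw : 1 ≤ w) (b : ℤ) (δ : ℝ) (h : Fin N → ℝ) :
    ∃ q, GapCondition (zone (candidateCut b w q) w) δ h := by
  have zone_eq : (zone (candidateCut b w (b.toNat + 1)) w : Set (Fin N)) = ∅ := by
    refine Set.eq_empty_of_forall_notMem fun j hj => ?_
    simp only [sites, candidateCut, Set.mem_ofPred_eq] at hj
    have : 1 * b.toNat ≤ w * b.toNat := Nat.mul_le_mul_right _ hw
    grind
  exact ⟨_, zone_eq ▸ gapCondition_empty δ h⟩

theorem gapCondition_firstGap (hw : 1 ≤ w) (b : ℤ) (δ : ℝ) (h : Fin N → ℝ) :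
    GapCondition (zone (candidateCut b w (firstGap b w δ h)) w) δ h :=
  Nat.sInf_mem (exists_gapCondition_candidateCut hw b δ h)

theorem measurable_firstGap (hw : 1 ≤ w) (b : ℤ) (δ : ℝ) :
    Measurable (firstGap b w δ : (Fin N → ℝ) → ℕ) := by
  classical
  have eq_find : (firstGap b w δ : (Fin N → ℝ) → ℕ) =
      fun h => Nat.find (exists_gapCondition_candidateCut hw b δ h) :=
    funext fun h => Nat.sInf_def _
  rw [eq_find]
  exact measurable_find _ fun q => measurableSet_gapCondition _ δ

theorem measurable_transportTo_apply (R : ℕ) (J : ℝ) (V : Fin N → SpinOp N) (b : ℤ) (w n q : ℕ)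
    (σ τ : Fin N → Bool) : Measurable fun h => transportTo R J h V b w n q σ τ := by
  simp only [transportTo, Matrix.add_apply, Matrix.sub_apply]
  exact ((measurable_hamCut_apply J V b σ τ).sub (measurable_hamCut_apply J V _ σ τ)).add
    (measurable_windowTransport_apply R J V _ w n σ τ)

theorem measurable_apply_of_countable {ι Ω β : Type*} [MeasurableSpace ι] [Countable ι]
    [MeasurableSingletonClass ι] [MeasurableSpace Ω] [MeasurableSpace β] {F : ι → Ω → β}
    (hF : ∀ i, Measurable (F i)) {q : Ω → ι} (hq : Measurable q) :
    Measurable fun ω => F (q ω) ω :=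
  (measurable_from_prod_countable_right (f := fun p : ι × Ω => F p.1 p.2) hF).comp
    (hq.prodMk measurable_id)

theorem measurable_transportTo_firstGap_apply (hw : 1 ≤ w) (R : ℕ) (J : ℝ) (V : Fin N → SpinOp N)
    (b : ℤ) (n : ℕ) (δ : ℝ) (σ τ : Fin N → Bool) :
    Measurable fun h => transportTo R J h V b w n (firstGap b w δ h) σ τ :=
  measurable_apply_of_countable (F := fun q h => transportTo R J h V b w n q σ τ)
    (fun q => measurable_transportTo_apply R J V b w n q σ τ) (measurable_firstGap hw b δ)

theorem measure_pi_le_firstGap_le {μ : Fin N → Measure ℝ} [∀ i, IsProbabilityMeasure (μ i)]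
    (hμ : ∀ i, μ i ≤ volume) (b : ℤ) (w : ℕ) (δ : ℝ) (Q : ℕ) :
    Measure.pi μ {h | Q ≤ firstGap b w δ h} ≤ (3 ^ (2 * w) * ENNReal.ofReal δ) ^ Q := by
  have no_gap : {h : Fin N → ℝ | Q ≤ firstGap b w δ h} ⊆
      ⋂ q ∈ Finset.range Q, {h | ¬GapCondition (zone (candidateCut b w q) w) δ h} :=
    fun h hQ => Set.mem_iInter₂.2 fun q hq =>
      Nat.notMem_of_lt_sInf ((Finset.mem_range.1 hq).trans_le hQ)
  have not_gap_le (q : ℕ) : Measure.pi μ {h | ¬GapCondition (zone (candidateCut b w q) w) δ h} ≤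
      3 ^ (2 * w) * ENNReal.ofReal δ := by
    grw [measure_pi_not_gapCondition_le hμ, ncard_zone_le]
    norm_num
  have all_le := measure_pi_biInter_le_pow_of_dependsOn (disjoint_zone_candidateCut b w)
    (fun q => (measurableSet_gapCondition _ δ).compl)
    (fun q h h' hh => propext (not_congr (gapCondition_congr hh))) not_gap_le (Finset.range Q)
  rw [Finset.card_range] at all_le
  exact (measure_mono no_gap).trans all_le

theorem hamL_eq_hamCut (J : ℝ) (h : Fin N → ℝ) (V : Fin N → SpinOp N) (istar : Fin N) :
    HamL N J h V istar = hamCut J h V (istar + 1) :=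
  Finset.sum_congr (Finset.filter_congr fun i _ => by
    rw [Int.lt_add_one_iff, Nat.cast_le, Fin.le_def]) fun _ _ => rfl

theorem current_sub_transportTo (J : ℝ) (h : Fin N → ℝ) (V : Fin N → SpinOp N) (istar : Fin N)
    (w n q : ℕ) :
    current N J h V istar - Complex.I • (Ham N J h V * transportTo R J h V (istar + 1) w n q -
        transportTo R J h V (istar + 1) w n q * Ham N J h V) =
      Complex.I • ⁅Ham N J h V, hamCut J h V (candidateCut (istar + 1) w q) -
        windowTransport R J h V (candidateCut (istar + 1) w q) w n⁆ := by
  rw [current, hamL_eq_hamCut, ← Ring.lie_def, ← Ring.lie_def, ← smul_sub, ← lie_sub, transportTo]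
  congr 2
  abel

theorem opNorm_current_sub_transportTo_le (hR : 1 ≤ R) (hw : 1 ≤ w) (hδ : 0 < δ) (hδ1 : δ ≤ 1)
    (hJ : 0 ≤ J) (hV : ∀ i, SupportedOn (V i) (bond R i)) (hV1 : ∀ i, opNorm (V i) ≤ 1)
    (hh : ∀ i, |h i| ≤ 1) {istar : Fin N} {q : ℕ}
    (hgap : GapCondition (zone (candidateCut (istar + 1) w q) w) δ h) (hn : 2 ≤ n)
    (hwn : (n + 2) * R ≤ w) :
    opNorm (current N J h V istar - Complex.I • (Ham N J h V *
        transportTo R J h V (istar + 1) w n q - transportTo R J h V (istar + 1) w n q *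
          Ham N J h V)) ≤ 4 * w * expansionRatio R w δ J ^ (n + 1) := by
  rw [current_sub_transportTo, opNorm_smul, Complex.norm_I, one_mul]
  exact opNorm_lie_ham_hamCut_sub_windowTransport_le hR hw hδ hδ1 hJ hV hV1 hh hgap hn hwn

theorem opNorm_transportTo_le (hR : 1 ≤ R) (hw : 1 ≤ w) (hδ : 0 < δ) (hδ1 : δ ≤ 1) (hJ : 0 ≤ J)
    (hJ1 : J ≤ 1) (hV : ∀ i, SupportedOn (V i) (bond R i)) (hV1 : ∀ i, opNorm (V i) ≤ 1)
    (hh : ∀ i, |h i| ≤ 1) {q : ℕ} (hgap : GapCondition (zone (candidateCut b w q) w) δ h)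
    (hx : expansionRatio R w δ J ≤ 1 / 2) (n : ℕ) :
    opNorm (transportTo R J h V b w n q) ≤
      8 * w * expansionRatio R w δ J + 2 * (2 * w * q : ℕ) := by
  have moved_le := opNorm_hamCut_sub_hamCut_le hJ hJ1 hV1 hh b (2 * w * q)
  rw [← candidateCut] at moved_le
  grw [transportTo, opNorm_add_le, moved_le,
    opNorm_windowTransport_le hR hw hδ hδ1 hJ hV hV1 hh hgap hx, add_comm]

end CutSelection

section Asymptotics

open Filter Topology

variable {R : ℕ} {β ε J L : ℝ}

/-- The order of perturbation theory, as a function of `L = log (1 / J)`. -/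
noncomputable def expansionOrder (ε L : ℝ) : ℕ := ⌈L ^ (1 - ε)⌉₊ + 1

/-- The half-width of the zone around a cut that contains the transport operator of order
`expansionOrder ε L` together with its commutator with the Hamiltonian. -/
noncomputable def zoneWidth (R : ℕ) (ε L : ℝ) : ℕ := (expansionOrder ε L + 2) * R

theorem two_le_expansionOrder (hL : 0 < L) : 2 ≤ expansionOrder ε L :=
  Nat.succ_le_succ (Nat.ceil_pos.2 (Real.rpow_pos_of_pos hL _))

theorem rpow_le_expansionOrder (ε L : ℝ) : L ^ (1 - ε) ≤ expansionOrder ε L :=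
  (Nat.le_ceil _).trans (by simp [expansionOrder])

theorem one_le_zoneWidth (hR : 1 ≤ R) (ε L : ℝ) : 1 ≤ zoneWidth R ε L :=
  Nat.mul_pos (by simp) hR

theorem zoneWidth_le (hε : ε ≤ 1) (hL : 1 ≤ L) (R : ℕ) :
    (zoneWidth R ε L : ℝ) ≤ 5 * R * L ^ (1 - ε) := by
  have one_le : 1 ≤ L ^ (1 - ε) := Real.one_le_rpow hL (sub_nonneg.2 hε)
  have ceil_lt := Nat.ceil_lt_add_one (zero_le_one.trans one_le)
  calc (zoneWidth R ε L : ℝ) = (⌈L ^ (1 - ε)⌉₊ + 3) * R := by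
        push_cast [zoneWidth, expansionOrder]; ring
    _ ≤ (5 * L ^ (1 - ε)) * R := by gcongr; linarith
    _ = 5 * R * L ^ (1 - ε) := by ring

theorem eventually_zoneWidth_sq_mul_exp_le (R : ℕ) (hβ : 0 < β) (hε : ε ∈ Set.Icc (0 : ℝ) 1) :
    ∀ᶠ L in atTop, 64 * (zoneWidth R ε L : ℝ) ^ 2 * 2 ^ R * Real.exp (-(β / 2 * L)) ≤ 1 := by
  have tendsto_zero : Tendsto (fun L : ℝ => 1600 * (R : ℝ) ^ 2 * 2 ^ R *
      (L ^ (2 : ℝ) * Real.exp (-(β / 2 * L)))) atTop (𝓝 0) := by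
    simpa [neg_mul] using
      (tendsto_rpow_mul_exp_neg_mul_atTop_nhds_zero 2 (β / 2) (half_pos hβ)).const_mul _
  filter_upwards [tendsto_zero.eventually_le_const one_pos, eventually_ge_atTop 1] with L hsmall hL
  have rpow_le : L ^ (1 - ε) ≤ L := Real.rpow_le_self_of_one_le hL (sub_le_self 1 hε.1)
  calc 64 * (zoneWidth R ε L : ℝ) ^ 2 * 2 ^ R * Real.exp (-(β / 2 * L))
      ≤ 64 * (5 * R * L) ^ 2 * 2 ^ R * Real.exp (-(β / 2 * L)) := by
        grw [zoneWidth_le hε.2 hL, rpow_le]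
    _ = 1600 * (R : ℝ) ^ 2 * 2 ^ R * (L ^ (2 : ℝ) * Real.exp (-(β / 2 * L))) := by
        rw [Real.rpow_two]; ring
    _ ≤ 1 := hsmall

theorem eventually_rate_le (hR : 1 ≤ R) (hβ : 0 < β) (hε : ε ∈ Set.Ioc (0 : ℝ) 1) :
    ∀ᶠ L in atTop, 10 ^ (-3 : ℤ) * β / R * L ^ ε ≤
      β / 2 * L / (2 * zoneWidth R ε L : ℕ) - Real.log 3 := by
  have R_pos : (0 : ℝ) < R := Nat.cast_pos.2 hR
  have log_three_le : Real.log 3 ≤ 2 :=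
    (Real.log_le_sub_one_of_pos three_pos).trans (by norm_num)
  filter_upwards [(tendsto_rpow_atTop hε.1).eventually_ge_atTop (100 * R / β),
    eventually_ge_atTop 1] with L hLε hL
  have width_pos : (0 : ℝ) < zoneWidth R ε L := Nat.cast_pos.2 (one_le_zoneWidth hR ε L)
  have rpow_mul_rpow : L ^ ε * L ^ (1 - ε) = L := by
    rw [← Real.rpow_add (by linarith), add_sub_cancel, Real.rpow_one]
  have large : 100 ≤ β / R * L ^ ε := by
    rw [div_le_iff₀ hβ] at hLε
    rw [div_mul_eq_mul_div, le_div_iff₀ R_pos]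
    linarith
  have rate_ge : β / R * L ^ ε / 20 ≤ β / 2 * L / (2 * zoneWidth R ε L : ℕ) := by
    rw [Nat.cast_mul, Nat.cast_two, le_div_iff₀ (by positivity)]
    calc β / R * L ^ ε / 20 * (2 * zoneWidth R ε L)
        ≤ β / R * L ^ ε / 20 * (2 * (5 * R * L ^ (1 - ε))) := by
          grw [zoneWidth_le hε.2 hL]
      _ = β / 2 * (L ^ ε * L ^ (1 - ε)) := by field_simp; norm_num
      _ = β / 2 * L := by rw [rpow_mul_rpow]
  have rate_eq : 10 ^ (-3 : ℤ) * β / R * L ^ ε = β / R * L ^ ε / 1000 := by norm_num; ring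
  linarith

theorem mul_expansionRatio_exp_le {w : ℕ} (hJ : 0 < J)
    (hw : 64 * (w : ℝ) ^ 2 * 2 ^ R * Real.exp (-(β / 2 * Real.log (1 / J))) ≤ 1) :
    8 * w * expansionRatio R w (Real.exp (-(β / 2 * Real.log (1 / J)))) J ≤
      Real.exp (-((1 - β) * Real.log (1 / J))) := by
  set δ := Real.exp (-(β / 2 * Real.log (1 / J)))
  have div_eq : J / δ = δ * Real.exp (-((1 - β) * Real.log (1 / J))) := by
    rw [div_eq_iff (Real.exp_ne_zero _), ← Real.exp_add, ← Real.exp_add, one_div, Real.log_inv]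
    ring_nf
    exact (Real.exp_log hJ).symm
  calc 8 * w * expansionRatio R w δ J = 64 * (w : ℝ) ^ 2 * 2 ^ R * (J / δ) := by
        rw [expansionRatio]; ring
    _ = 64 * (w : ℝ) ^ 2 * 2 ^ R * δ * Real.exp (-((1 - β) * Real.log (1 / J))) := by
        rw [div_eq]; ring
    _ ≤ Real.exp (-((1 - β) * Real.log (1 / J))) := mul_le_of_le_one_left (Real.exp_nonneg _) hw

theorem exp_neg_mul_log_le_one (hβ : 0 ≤ β) (hJ : 0 < J) (hJ1 : J ≤ 1) :
    Real.exp (-(β * Real.log (1 / J))) ≤ 1 :=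
  Real.exp_le_one_iff.2 (neg_nonpos.2 (mul_nonneg hβ (Real.log_nonneg (one_le_one_div hJ hJ1))))

theorem expansionRatio_exp_le_half {w : ℕ} (hw : 1 ≤ w) (hβ : β ≤ 1) (hJ : 0 < J) (hJ1 : J ≤ 1)
    (hsmall : 64 * (w : ℝ) ^ 2 * 2 ^ R * Real.exp (-(β / 2 * Real.log (1 / J))) ≤ 1) :
    expansionRatio R w (Real.exp (-(β / 2 * Real.log (1 / J)))) J ≤ 1 / 2 := by
  have ratio_nonneg := expansionRatio_nonneg (R := R) (w := w)
    (Real.exp_nonneg (-(β / 2 * Real.log (1 / J)))) hJ.le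
  have mul_le_one := (mul_expansionRatio_exp_le hJ hsmall).trans
    (exp_neg_mul_log_le_one (sub_nonneg.2 hβ) hJ hJ1)
  have w_ge : (1 : ℝ) ≤ w := Nat.one_le_cast.2 hw
  linarith [mul_nonneg (sub_nonneg.2 w_ge) ratio_nonneg]

theorem mul_pow_succ_le_exp {w n : ℕ} {x : ℝ} (hw : 1 ≤ w) (hx : 0 ≤ x) (hβ : β ≤ 1)
    (hL : 0 < L) (hn : L ^ (1 - ε) ≤ n) (hwx : 8 * w * x ≤ Real.exp (-((1 - β) * L))) :
    4 * w * x ^ (n + 1) ≤ Real.exp (-((1 - β) / 4) * L ^ ((2 : ℝ) - ε)) := by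
  have w_ge : (1 : ℝ) ≤ 8 * w := by norm_cast; omega
  have rpow_eq : L ^ ((2 : ℝ) - ε) = L ^ (1 - ε) * L := by
    rw [← Real.rpow_add_one hL.ne']; ring_nf
  have order_mul_ge : L ^ ((2 : ℝ) - ε) / 4 ≤ (n + 1 : ℕ) * L := by
    have := mul_le_mul_of_nonneg_right hn hL.le
    have : 0 ≤ L ^ ((2 : ℝ) - ε) := by positivity
    push_cast
    linarith
  calc 4 * w * x ^ (n + 1)
      ≤ 8 * w * x ^ (n + 1) := by gcongr; norm_num
    _ ≤ (8 * w) ^ (n + 1) * x ^ (n + 1) := by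
        gcongr
        exact le_self_pow₀ w_ge (Nat.succ_ne_zero _)
    _ = (8 * w * x) ^ (n + 1) := (mul_pow _ _ _).symm
    _ ≤ Real.exp (-((1 - β) * L)) ^ (n + 1) := by gcongr
    _ = Real.exp (-((1 - β) * ((n + 1 : ℕ) * L))) := by
        rw [← Real.exp_nat_mul]; ring_nf
    _ ≤ Real.exp (-((1 - β) * (L ^ ((2 : ℝ) - ε) / 4))) := by
        gcongr
    _ = Real.exp (-((1 - β) / 4) * L ^ ((2 : ℝ) - ε)) := by ring_nf

theorem exists_forall_log_one_div {p : ℝ → Prop} (hp : ∀ᶠ L in atTop, p L) :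
    ∃ J₀ : ℝ, 0 < J₀ ∧ ∀ J, 0 < J → J ≤ J₀ → J < 1 ∧ p (Real.log (1 / J)) := by
  obtain ⟨L₀, hL₀⟩ := eventually_atTop.1 hp
  refine ⟨Real.exp (-max L₀ 1), Real.exp_pos _, fun J hJ hJ₀ => ⟨hJ₀.trans_lt (by simp), hL₀ _ ?_⟩⟩
  rw [← Real.log_le_iff_le_exp hJ] at hJ₀
  rw [one_div, Real.log_inv]
  exact (le_max_left _ _).trans (le_neg_of_le_neg hJ₀)

theorem exp_neg_mul_log_le_rpow (hR : 1 ≤ R) (hβ : β ≤ 1) (hJ : 0 < J) (hJ1 : J ≤ 1) :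
    Real.exp (-((1 - β) * Real.log (1 / J))) ≤ J ^ ((1 - β) / (8 * R)) := by
  have R_ge : (1 : ℝ) ≤ R := Nat.one_le_cast.2 hR
  calc Real.exp (-((1 - β) * Real.log (1 / J))) = J ^ (1 - β) := by
        rw [Real.rpow_def_of_pos hJ, one_div, Real.log_inv]; ring_nf
    _ ≤ J ^ ((1 - β) / (8 * R)) :=
        Real.rpow_le_rpow_of_exponent_ge hJ hJ1 (div_le_self (by linarith) (by linarith))

end Asymptotics

section Tail

open scoped ENNReal

theorem three_pow_mul_ofReal_exp_le {d : ℕ} {a s : ℝ} (hd : 0 < d) (hs : s ≤ a / d - Real.log 3) :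
    3 ^ d * ENNReal.ofReal (Real.exp (-a)) ≤ ENNReal.ofReal (Real.exp (-s)) ^ d := by
  have three_eq : (3 : ℝ≥0∞) = ENNReal.ofReal (Real.exp (Real.log 3)) := by
    rw [Real.exp_log three_pos, ENNReal.ofReal_ofNat]
  have mul_le : d * (s + Real.log 3) ≤ a :=
    (le_div_iff₀' (Nat.cast_pos.2 hd)).1 (le_sub_iff_add_le.1 hs)
  rw [three_eq, ← ENNReal.ofReal_pow (Real.exp_nonneg _), ← ENNReal.ofReal_mul (by positivity),
    ← ENNReal.ofReal_pow (Real.exp_nonneg _), ← Real.exp_nat_mul, ← Real.exp_nat_mul,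
    ← Real.exp_add]
  gcongr
  linarith

theorem measure_le_mul_le_exp {Ω : Type*} [MeasurableSpace Ω] {μ : Measure Ω} {q : Ω → ℕ} {d : ℕ}
    {s : ℝ} (hd : 0 < d) (hs : 0 ≤ s)
    (hq : ∀ Q, μ {ω | Q ≤ q ω} ≤ (ENNReal.ofReal (Real.exp (-s)) ^ d) ^ Q) (ℓ : ℕ) :
    μ {ω | ℓ ≤ d * q ω} ≤ ENNReal.ofReal (Real.exp (-s * ℓ)) := by
  have exp_le_one : ENNReal.ofReal (Real.exp (-s)) ≤ 1 := by simpa using hs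
  calc μ {ω | ℓ ≤ d * q ω} = μ {ω | ℓ ⌈/⌉ d ≤ q ω} := by
        simp only [ceilDiv_le_iff_le_mul hd]
    _ ≤ ENNReal.ofReal (Real.exp (-s)) ^ (d * (ℓ ⌈/⌉ d)) := (hq _).trans_eq (pow_mul _ _ _).symm
    _ ≤ ENNReal.ofReal (Real.exp (-s)) ^ ℓ :=
        pow_le_pow_right_of_le_one' exp_le_one (le_smul_ceilDiv hd)
    _ = ENNReal.ofReal (Real.exp (-s * ℓ)) := by
        rw [← ENNReal.ofReal_pow (Real.exp_nonneg _), ← Real.exp_nat_mul, mul_comm]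

theorem disorderMeasure_le_mul_firstGap_le {N w : ℕ} {a s : ℝ} (hw : 1 ≤ w) (hs : 0 ≤ s)
    (hsa : s ≤ a / (2 * w : ℕ) - Real.log 3) (b : ℤ) (ℓ : ℕ) :
    disorderMeasure N {h | ℓ ≤ 2 * w * firstGap b w (Real.exp (-a)) h} ≤
      ENNReal.ofReal (Real.exp (-s * ℓ)) := by
  have : IsProbabilityMeasure (volume.restrict (Set.Icc (0 : ℝ) 1)) := ⟨by simp⟩
  refine measure_le_mul_le_exp (by omega) hs (fun Q => ?_) ℓ
  grw [disorderMeasure, measure_pi_le_firstGap_le (fun _ => Measure.restrict_le_self),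
    three_pow_mul_ofReal_exp_le (by omega) hsa]

end Tail

section StrongDisorder

variable {R N w n q : ℕ} {β ε J : ℝ} {h : Fin N → ℝ} {V : Fin N → SpinOp N}

section

variable (hR : 1 ≤ R) (hw : 1 ≤ w) (hβ : β ∈ Set.Icc (0 : ℝ) 1) (hJ : 0 < J) (hJ1 : J < 1)
  (hsmall : 64 * (w : ℝ) ^ 2 * 2 ^ R * Real.exp (-(β / 2 * Real.log (1 / J))) ≤ 1)
  (hV : ∀ i, SupportedOn (V i) (bond R i)) (hV1 : ∀ i, opNorm (V i) ≤ 1) (hh : ∀ i, |h i| ≤ 1)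

include hR hw hβ hJ hJ1 hsmall hV hV1 hh

theorem opNorm_current_sub_transportTo_le_exp {istar : Fin N}
    (hgap : GapCondition (zone (candidateCut (istar + 1) w q) w)
      (Real.exp (-(β / 2 * Real.log (1 / J)))) h)
    (hn : 2 ≤ n) (hLn : Real.log (1 / J) ^ (1 - ε) ≤ n) (hwn : (n + 2) * R ≤ w) :
    opNorm (current N J h V istar - Complex.I • (Ham N J h V *
        transportTo R J h V (istar + 1) w n q - transportTo R J h V (istar + 1) w n q *
          Ham N J h V)) ≤
      Real.exp (-((1 - β) / 4) * Real.log (1 / J) ^ ((2 : ℝ) - ε)) :=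
  (opNorm_current_sub_transportTo_le hR hw (Real.exp_pos _)
    (exp_neg_mul_log_le_one (div_nonneg hβ.1 zero_le_two) hJ hJ1.le)
    hJ.le hV hV1 hh hgap hn hwn).trans <|
  mul_pow_succ_le_exp hw (expansionRatio_nonneg (Real.exp_nonneg _) hJ.le) hβ.2
    (Real.log_pos (one_lt_one_div hJ hJ1)) hLn (mul_expansionRatio_exp_le hJ hsmall)

theorem opNorm_transportTo_le_rpow {b : ℤ}
    (hgap : GapCondition (zone (candidateCut b w q) w)
      (Real.exp (-(β / 2 * Real.log (1 / J)))) h) (n : ℕ) :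
    opNorm (transportTo R J h V b w n q) ≤
      J ^ ((1 - β) / (8 * R)) + 2 * (2 * w * q : ℕ) := by
  grw [opNorm_transportTo_le hR hw (Real.exp_pos _)
    (exp_neg_mul_log_le_one (div_nonneg hβ.1 zero_le_two) hJ hJ1.le) hJ.le hJ1.le hV hV1 hh hgap
    (expansionRatio_exp_le_half hw hβ.2 hJ hJ1.le hsmall), mul_expansionRatio_exp_le hJ hsmall,
    exp_neg_mul_log_le_rpow hR hβ.2 hJ hJ1.le]

end

end StrongDisorder

theorem setOf_le_sub_one_eq_bond {N : ℕ} (R : ℕ) (i : Fin N) :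
    {j : Fin N | (i : ℤ) ≤ j ∧ (j : ℤ) ≤ i + R - 1} = bond R i :=
  Set.ext fun _ => and_congr_right fun _ => Int.le_sub_one_iff

/-- Theorem 2 (Slow transport): for strong disorder (`J ≤ J_*`), the energy current through any
fiducial site is, up to an error of size `exp(−((1−β)/4)(log(1/J))^{2−ε})`, of the form
`i[H,O]` for a bounded observable `O` with `‖O‖ ≤ J^{(1−β)/(8R)} + 2ℓ`, where the random
integer `ℓ` satisfies `Prob(ℓ ≥ ℓ₀) ≤ exp(−c₀(log(1/J))^ε ℓ₀)` with `c₀ = 10⁻³β/R`. -/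
theorem slow_transport (R : ℕ) (hR : 1 ≤ R)
    (β ε : ℝ) (hβ : β ∈ Set.Ioo (0 : ℝ) 1) (hε : ε ∈ Set.Ioo (0 : ℝ) 1) :
    ∃ Jstar : ℝ, 0 < Jstar ∧
      ∀ J : ℝ, 0 < J → J ≤ Jstar →
      ∀ N : ℕ, 1 ≤ N →
      ∀ istar : Fin N,
      ∀ V : Fin N → SpinOp N,
        (∀ i : Fin N,
          SupportedOn (V i) {j : Fin N | (i : ℤ) ≤ (j : ℤ) ∧ (j : ℤ) ≤ (i : ℤ) + R - 1} ∧
          opNorm (V i) ≤ 1) →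
      ∃ (O : (Fin N → ℝ) → SpinOp N) (ℓ : (Fin N → ℝ) → ℕ),
        -- measurability in the disorder
        (∀ σ σ' : Fin N → Bool, Measurable fun h => O h σ σ') ∧
        Measurable ℓ ∧
        -- pointwise bounds, for disorder configurations in [0,1]^N
        (∀ h : Fin N → ℝ, (∀ i, h i ∈ Set.Icc (0 : ℝ) 1) →
          opNorm (current N J h V istar -
              Complex.I • (Ham N J h V * O h - O h * Ham N J h V)) ≤
            Real.exp (-((1 - β) / 4) * Real.log (1 / J) ^ ((2 : ℝ) - ε)) ∧
          opNorm (O h) ≤ J ^ ((1 - β) / (8 * R)) + 2 * ℓ h) ∧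
        -- tail bound on the random size ℓ
        (∀ ℓ₀ : ℕ, 1 ≤ ℓ₀ →
          disorderMeasure N {h | ℓ₀ ≤ ℓ h} ≤
            ENNReal.ofReal
              (Real.exp (-(10 ^ (-3 : ℤ) * β / R) * Real.log (1 / J) ^ ε * ℓ₀))) := by
  have hβ' : β ∈ Set.Icc (0 : ℝ) 1 := Set.Ioo_subset_Icc_self hβ
  obtain ⟨J₀, hJ₀, hparam⟩ := exists_forall_log_one_div <|
    (eventually_zoneWidth_sq_mul_exp_le R hβ.1 (Set.Ioo_subset_Icc_self hε)).and
      (eventually_rate_le hR hβ.1 (Set.Ioo_subset_Ioc_self hε))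
  refine ⟨J₀, hJ₀, fun J hJ hJJ₀ N _ istar V hV => ?_⟩
  simp only [setOf_le_sub_one_eq_bond, forall_and] at hV
  obtain ⟨hVR, hV1⟩ := hV
  obtain ⟨hJ1, hsmall, hrate⟩ := hparam J hJ hJJ₀
  set L := Real.log (1 / J)
  have hL : 0 < L := Real.log_pos (one_lt_one_div hJ hJ1)
  have hw := one_le_zoneWidth hR ε L
  let q := firstGap (N := N) (istar + 1) (zoneWidth R ε L) (Real.exp (-(β / 2 * L)))
  refine ⟨fun h => transportTo R J h V (istar + 1) (zoneWidth R ε L) (expansionOrder ε L) (q h),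
    fun h => 2 * zoneWidth R ε L * q h, measurable_transportTo_firstGap_apply hw R J V _ _ _,
    (measurable_firstGap hw _ _).const_mul _, fun h hh => ?_, fun ℓ₀ _ => ?_⟩
  · have hgap := gapCondition_firstGap hw (istar + 1) (Real.exp (-(β / 2 * L))) h
    have hh1 (i : Fin N) : |h i| ≤ 1 := abs_le.2 ⟨by linarith [(hh i).1], (hh i).2⟩
    exact ⟨opNorm_current_sub_transportTo_le_exp hR hw hβ' hJ hJ1 hsmall hVR hV1 hh1 hgap
        (two_le_expansionOrder hL) (rpow_le_expansionOrder ε L) le_rfl,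
      opNorm_transportTo_le_rpow hR hw hβ' hJ hJ1 hsmall hVR hV1 hh1 hgap _⟩
  · rw [neg_mul]
    exact disorderMeasure_le_mul_firstGap_le hw (have := hβ.1; by positivity) hrate _ ℓ₀
end

section
/- Let B and C be complex matrices indexed by a finite type ι, and let B∘C denote their entrywise (Hadamard) product, (B∘C)_{ij} = B_{ij} C_{ij}. Then ‖B∘C‖ ≤ ‖B‖ · max_i (Σ_j |C_{ij}|²)^{1/2}. -/
/-!
Cauchy–Schwarz in each row splits off the rows of `C`:
`|((B∘C)x)_i|² ≤ (Σ_j |C_{ij}|²) (Σ_j |B_{ij}|² |x_j|²)`. Summing over `i` and exchanging the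
two sums leaves only the column norms of `B`, and the `j`-th of these is `‖B e_j‖ ≤ ‖B‖`.
-/

theorem le_sq_iSup_sqrt {ι : Type*} [Finite ι] (f : ι → ℝ) (i : ι) : f i ≤ (⨆ k, √(f k)) ^ 2 :=
  (Real.sqrt_le_iff.1 (le_ciSup (f := fun k ↦ √(f k)) (Set.finite_range _).bddAbove i)).2

section Hadamard

open Matrix WithLp
open scoped Matrix.Norms.L2Operator

variable {m n R 𝕜 : Type*} [Fintype n] [NonUnitalSeminormedRing R] [RCLike 𝕜]

theorem norm_sq_hadamard_mulVec_apply_le (B C : Matrix m n R) (x : n → R) (i : m) :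
    ‖((B ⊙ C) *ᵥ x) i‖ ^ 2 ≤ (∑ j, ‖C i j‖ ^ 2) * ∑ j, ‖B i j‖ ^ 2 * ‖x j‖ ^ 2 := by
  have triangle : ‖((B ⊙ C) *ᵥ x) i‖ ≤ ∑ j, ‖C i j‖ * (‖B i j‖ * ‖x j‖) :=
    norm_sum_le_of_le _ fun j _ ↦
      calc ‖B i j * C i j * x j‖ ≤ ‖B i j‖ * ‖C i j‖ * ‖x j‖ := norm_mul₃_le
        _ = ‖C i j‖ * (‖B i j‖ * ‖x j‖) := by ring
  calc ‖((B ⊙ C) *ᵥ x) i‖ ^ 2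
      ≤ (∑ j, ‖C i j‖ * (‖B i j‖ * ‖x j‖)) ^ 2 := by gcongr
    _ ≤ (∑ j, ‖C i j‖ ^ 2) * ∑ j, (‖B i j‖ * ‖x j‖) ^ 2 :=
        Finset.sum_mul_sq_le_sq_mul_sq _ _ _
    _ = (∑ j, ‖C i j‖ ^ 2) * ∑ j, ‖B i j‖ ^ 2 * ‖x j‖ ^ 2 := by simp only [mul_pow]

variable [Fintype m]

theorem sum_norm_sq_hadamard_mulVec_le (B C : Matrix m n R) (x : n → R) {b c : ℝ} (hc : 0 ≤ c)
    (hB : ∀ j, ∑ i, ‖B i j‖ ^ 2 ≤ b) (hC : ∀ i, ∑ j, ‖C i j‖ ^ 2 ≤ c) :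
    ∑ i, ‖((B ⊙ C) *ᵥ x) i‖ ^ 2 ≤ b * c * ∑ j, ‖x j‖ ^ 2 :=
  calc ∑ i, ‖((B ⊙ C) *ᵥ x) i‖ ^ 2
      ≤ ∑ i, (∑ j, ‖C i j‖ ^ 2) * ∑ j, ‖B i j‖ ^ 2 * ‖x j‖ ^ 2 :=
        Finset.sum_le_sum fun i _ ↦ norm_sq_hadamard_mulVec_apply_le B C x i
    _ ≤ ∑ i, c * ∑ j, ‖B i j‖ ^ 2 * ‖x j‖ ^ 2 := by
        gcongr with i
        exact hC i
    _ = c * ∑ j, (∑ i, ‖B i j‖ ^ 2) * ‖x j‖ ^ 2 := by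
        rw [← Finset.mul_sum, Finset.sum_comm]
        simp only [Finset.sum_mul]
    _ ≤ c * ∑ j, b * ‖x j‖ ^ 2 := by
        gcongr with j
        exact hB j
    _ = b * c * ∑ j, ‖x j‖ ^ 2 := by
        rw [← Finset.mul_sum]
        ring

variable [DecidableEq n]

theorem sqrt_sum_norm_sq_col_le_l2_opNorm (A : Matrix m n 𝕜) (j : n) :
    √(∑ i, ‖A i j‖ ^ 2) ≤ ‖A‖ := by
  simpa [EuclideanSpace.norm_eq] using l2_opNorm_mulVec A (EuclideanSpace.single j 1)

theorem iSup_sqrt_sum_norm_sq_col_le_l2_opNorm (A : Matrix m n 𝕜) :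
    ⨆ j, √(∑ i, ‖A i j‖ ^ 2) ≤ ‖A‖ :=
  Real.iSup_le (sqrt_sum_norm_sq_col_le_l2_opNorm A) (norm_nonneg A)

theorem hadamard_opNorm_le_general (B C : Matrix m n 𝕜) :
    ‖B ⊙ C‖ ≤ (⨆ j, √(∑ i, ‖B i j‖ ^ 2)) * ⨆ i, √(∑ j, ‖C i j‖ ^ 2) := by
  set b := ⨆ j, √(∑ i, ‖B i j‖ ^ 2)
  set c := ⨆ i, √(∑ j, ‖C i j‖ ^ 2)
  have hb : 0 ≤ b := Real.iSup_nonneg fun _ ↦ Real.sqrt_nonneg _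
  have hc : 0 ≤ c := Real.iSup_nonneg fun _ ↦ Real.sqrt_nonneg _
  refine ContinuousLinearMap.opNorm_le_bound _ (by positivity) fun x ↦ ?_
  change ‖toLp 2 ((B ⊙ C) *ᵥ ofLp x)‖ ≤ b * c * ‖x‖
  refine (sq_le_sq₀ (by positivity) (by positivity)).1 ?_
  rw [mul_pow, mul_pow, EuclideanSpace.norm_sq_eq, EuclideanSpace.norm_sq_eq x]
  exact sum_norm_sq_hadamard_mulVec_le B C x (sq_nonneg c)
    (le_sq_iSup_sqrt fun j ↦ ∑ i, ‖B i j‖ ^ 2) (le_sq_iSup_sqrt fun i ↦ ∑ j, ‖C i j‖ ^ 2)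

end Hadamard

/-- Schur's bound on the operator norm of a Hadamard (entrywise) product:
`‖B∘C‖ ≤ ‖B‖ · max_i (Σ_j |C_{ij}|²)^{1/2}`. -/
theorem hadamard_opNorm_le {ι : Type*} [Fintype ι] [DecidableEq ι] (B C : Matrix ι ι ℂ) :
    opNorm (Matrix.hadamard B C) ≤ opNorm B * ⨆ i, Real.sqrt (∑ j, ‖C i j‖ ^ 2) :=
  (hadamard_opNorm_le_general B C).trans <| mul_le_mul_of_nonneg_right
    (iSup_sqrt_sum_norm_sq_col_le_l2_opNorm B) (Real.iSup_nonneg fun _ ↦ Real.sqrt_nonneg _)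
end

section
/- Fix integers R ≥ 1, k ≥ 1, i ∈ ℤ, and positive integers m_1, …, m_k, and set m = m_1 + ⋯ + m_k. Then the number of k-tuples (I_1, …, I_k) of intervals in ℤ such that |I_p| = m_p R for each p = 1, …, k, such that I_j ∩ (I_1 ∪ ⋯ ∪ I_{j−1}) ≠ ∅ for each 2 ≤ j ≤ k, and such that min(I_1 ∪ ⋯ ∪ I_k) = i, is at most m · R^k · m!/(m − k + 1)!. -/
/-!
Record a tuple of intervals by its left endpoints. As each interval meets an earlier one, the first
`j` intervals lie in an interval whose length is at most the sum of their lengths. Hence the right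
end of the `j`-th interval, measured from the minimum of the preceding ones, takes at most that many
values. These offsets determine the tuple up to translation, and the minimum `i` of the union fixes
the translation. The resulting product of partial sums is compared factor by factor with
`m (m - 1) ⋯ (m - k + 2)`; the bound so obtained is better than required by a factor `m R`.
-/

open Finset

variable {n : ℕ}

lemma Iic_succ_eq_insert_Iic_castSucc (j : Fin n) :
    Iic j.succ = insert j.succ (Iic j.castSucc) := by
  ext p
  simp only [mem_insert, mem_Iic, Fin.le_def, Fin.ext_iff, Fin.val_succ, Fin.val_castSucc]
  omega

lemma sum_Iic_succ {M : Type*} [AddCommMonoid M] (f : Fin (n + 1) → M) (j : Fin n) :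
    ∑ p ∈ Iic j.succ, f p = ∑ p ∈ Iic j.castSucc, f p + f j.succ := by
  rw [Iic_succ_eq_insert_Iic_castSucc, sum_insert (by simp), add_comm]

section RunningMin

variable {α : Type*} [LinearOrder α]

/-- The minimum of the terms `a 0, …, a j` of a finite sequence. -/
def runningMin (a : Fin n → α) (j : Fin n) : α :=
  (Iic j).inf' nonempty_Iic a

lemma runningMin_le (a : Fin n → α) {p j : Fin n} (h : p ≤ j) : runningMin a j ≤ a p :=
  inf'_le a (mem_Iic.2 h)

lemma runningMin_zero (a : Fin (n + 1) → α) : runningMin a 0 = a 0 :=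
  le_antisymm (runningMin_le a le_rfl) <| le_inf' _ _ fun _ hp =>
    (congrArg a (Fin.le_zero_iff.1 (mem_Iic.1 hp))).ge

lemma runningMin_succ (a : Fin (n + 1) → α) (j : Fin n) :
    runningMin a j.succ = min (a j.succ) (runningMin a j.castSucc) := by
  simp only [runningMin, Iic_succ_eq_insert_Iic_castSucc]
  exact inf'_insert nonempty_Iic a

end RunningMin

/-- The integer intervals `[a p, a p + ℓ p)` form a chain: each one after the first meets an
earlier one. -/
def IsIntervalChain (ℓ : Fin (n + 1) → ℕ) (a : Fin (n + 1) → ℤ) : Prop :=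
  ∀ j : Fin n, ∃ p ≤ j.castSucc, a j.succ < a p + ℓ p ∧ a p < a j.succ + ℓ j.succ

/-- Left endpoints of the interval chains with lengths `ℓ` whose union has minimum `i`. -/
def chainStarts (ℓ : Fin (n + 1) → ℕ) (i : ℤ) : Set (Fin (n + 1) → ℤ) :=
  {a | IsIntervalChain ℓ a ∧ runningMin a (Fin.last n) = i}

/-- The right ends of the intervals `[a p, a p + ℓ p)` after the first, each measured from the
minimum of the preceding intervals. -/
def endOffset (ℓ : Fin (n + 1) → ℕ) (a : Fin (n + 1) → ℤ) (j : Fin n) : ℤ :=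
  a j.succ + ℓ j.succ - runningMin a j.castSucc

lemma IsIntervalChain.add_le_runningMin_add_sum {ℓ : Fin (n + 1) → ℕ} {a : Fin (n + 1) → ℤ}
    (h : IsIntervalChain ℓ a) (j : Fin (n + 1)) :
    ∀ p ≤ j, a p + ℓ p ≤ runningMin a j + (∑ r ∈ Iic j, ℓ r : ℕ) := by
  induction j using Fin.induction with
  | zero =>
    intro p hp
    obtain rfl := Fin.le_zero_iff.1 hp
    have hsingle := single_le_sum (f := ℓ) (fun _ _ => Nat.zero_le _) (mem_Iic.2 hp)
    rw [runningMin_zero]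
    omega
  | succ j ih =>
    obtain ⟨q, hq, hjq, hqj⟩ := h j
    have hmin := runningMin_le a hq
    have hmax := ih q hq
    rw [runningMin_succ, sum_Iic_succ]
    intro p hp
    rcases hp.eq_or_lt with rfl | hp
    · omega
    · have hprev := ih p (Fin.le_castSucc_iff.2 hp)
      omega

lemma IsIntervalChain.endOffset_mem_Ioc {ℓ : Fin (n + 1) → ℕ} {a : Fin (n + 1) → ℤ}
    (h : IsIntervalChain ℓ a) (j : Fin n) :
    endOffset ℓ a j ∈ Ioc 0 ((∑ r ∈ Iic j.succ, ℓ r : ℕ) : ℤ) := by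
  obtain ⟨p, hp, -, hpj⟩ := h j
  have hmin := runningMin_le a hp
  have hspan := h.add_le_runningMin_add_sum j.succ j.succ le_rfl
  rw [runningMin_succ] at hspan
  rw [mem_Ioc, endOffset]
  omega

lemma sub_eq_sub_zero_of_endOffset_eq {ℓ : Fin (n + 1) → ℕ} {a b : Fin (n + 1) → ℤ}
    (h : endOffset ℓ a = endOffset ℓ b) (j : Fin (n + 1)) :
    a j - b j = a 0 - b 0 ∧ runningMin a j - runningMin b j = a 0 - b 0 := by
  induction j using Fin.induction with
  | zero => simp only [runningMin_zero, and_self]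
  | succ j ih =>
    have hj := congrFun h j
    simp only [endOffset] at hj
    rw [runningMin_succ, runningMin_succ]
    omega

lemma injOn_endOffset_chainStarts (ℓ : Fin (n + 1) → ℕ) (i : ℤ) :
    Set.InjOn (endOffset ℓ) (chainStarts ℓ i) := by
  intro a ha b hb hab
  have hmin : runningMin a (Fin.last n) = runningMin b (Fin.last n) := ha.2.trans hb.2.symm
  have hshift := (sub_eq_sub_zero_of_endOffset_eq hab (Fin.last n)).2
  funext j
  have hj := (sub_eq_sub_zero_of_endOffset_eq hab j).1
  omega

lemma chainStarts_finite_and_ncard_le (ℓ : Fin (n + 1) → ℕ) (i : ℤ) :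
    (chainStarts ℓ i).Finite ∧
      (chainStarts ℓ i).ncard ≤ ∏ j : Fin n, ∑ r ∈ Iic j.succ, ℓ r := by
  let box : Finset (Fin n → ℤ) :=
    Fintype.piFinset fun j => Ioc 0 ((∑ r ∈ Iic j.succ, ℓ r : ℕ) : ℤ)
  have hmaps : Set.MapsTo (endOffset ℓ) (chainStarts ℓ i) box := fun a ha =>
    mem_coe.2 <| Fintype.mem_piFinset.2 ha.1.endOffset_mem_Ioc
  have hinj := injOn_endOffset_chainStarts ℓ i
  have hbox : box.card = ∏ j : Fin n, ∑ r ∈ Iic j.succ, ℓ r := by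
    simp only [box, Fintype.card_piFinset, Int.card_Ioc, sub_zero, Int.toNat_natCast]
  refine ⟨.of_injOn hmaps hinj box.finite_toSet, ?_⟩
  rw [← hbox, ← Set.ncard_coe_finset]
  exact Set.ncard_le_ncard_of_injOn _ hmaps hinj box.finite_toSet

/-- Tuples of integer intervals of lengths `ℓ`, each meeting the union of the previous ones, whose
union has minimum `i`. The last two clauses express the minimum without a nonemptiness proof. -/
def intervalTuples {k : ℕ} (ℓ : Fin k → ℕ) (i : ℤ) : Set (Fin k → Finset ℤ) :=
  {I | (∀ p, ∃ a : ℤ, I p = Icc a (a + (ℓ p : ℤ) - 1)) ∧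
    (∀ j : Fin k, 0 < (j : ℕ) → (I j ∩ (univ.filter fun p => p < j).biUnion I).Nonempty) ∧
    i ∈ univ.biUnion I ∧ ∀ x ∈ univ.biUnion I, i ≤ x}

lemma intervalTuples_subset_image_chainStarts {ℓ : Fin (n + 1) → ℕ} (hℓ : ∀ p, 1 ≤ ℓ p) (i : ℤ) :
    intervalTuples ℓ i ⊆
      (fun a p => Icc (a p) (a p + (ℓ p : ℤ) - 1)) '' chainStarts ℓ i := by
  rintro I ⟨hI, hmeet, hi, hmin⟩
  choose a ha using hI
  obtain rfl : I = fun p => Icc (a p) (a p + (ℓ p : ℤ) - 1) := funext ha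
  simp only [mem_biUnion, mem_univ, true_and, mem_Icc] at hi hmin
  have hstart (p : Fin (n + 1)) : i ≤ a p := by
    have := hℓ p
    exact hmin _ ⟨p, by omega⟩
  refine ⟨a, ⟨fun j => ?_, ?_⟩, rfl⟩
  · obtain ⟨x, hx⟩ := hmeet j.succ (by simp)
    simp only [mem_inter, mem_biUnion, mem_filter, mem_univ, true_and, mem_Icc] at hx
    obtain ⟨hxj, p, hp, hxp⟩ := hx
    exact ⟨p, Fin.le_castSucc_iff.2 hp, by omega, by omega⟩
  · obtain ⟨p, hp, -⟩ := hi
    exact le_antisymm ((runningMin_le a (Fin.le_last p)).trans hp) (le_inf' _ _ fun q _ => hstart q)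

lemma intervalTuples_finite_and_card_le {ℓ : Fin (n + 1) → ℕ} (hℓ : ∀ p, 1 ≤ ℓ p) (i : ℤ) :
    (intervalTuples ℓ i).Finite ∧
      Nat.card (intervalTuples ℓ i) ≤ ∏ j : Fin n, ∑ r ∈ Iic j.succ, ℓ r := by
  have hsub := intervalTuples_subset_image_chainStarts hℓ i
  obtain ⟨hfin, hcard⟩ := chainStarts_finite_and_ncard_le ℓ i
  refine ⟨(hfin.image _).subset hsub, ?_⟩
  rw [Nat.card_coe_set_eq]
  exact (Set.ncard_le_ncard hsub (hfin.image _)).trans ((Set.ncard_image_le hfin).trans hcard)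

lemma sum_add_card_compl_le_sum {ι : Type*} [Fintype ι] [DecidableEq ι] {m : ι → ℕ}
    (hm : ∀ p, 1 ≤ m p) (s : Finset ι) : ∑ p ∈ s, m p + #sᶜ ≤ ∑ p, m p := by
  rw [← sum_add_sum_compl s m, card_eq_sum_ones]
  gcongr with p
  exact hm p

lemma prod_sum_Iic_succ_le_descFactorial {m : Fin (n + 1) → ℕ} (hm : ∀ p, 1 ≤ m p) :
    ∏ j : Fin n, ∑ r ∈ Iic j.succ, m r ≤ (∑ p, m p).descFactorial n := by
  have htail (j : Fin (n + 1)) : ∑ r ∈ Iic j, m r + (n - j) ≤ ∑ p, m p := by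
    simpa [card_compl] using sum_add_card_compl_le_sum hm (Iic j)
  obtain ⟨d, hd⟩ : ∃ d, ∑ p, m p = d + n :=
    Nat.exists_eq_add_of_le' (by simpa using (Nat.le_add_left ..).trans (htail 0))
  calc ∏ j : Fin n, ∑ r ∈ Iic j.succ, m r
      ≤ ∏ j : Fin n, (d + 1 + j) := by
        gcongr with j
        have hj := htail j.succ
        rw [Fin.val_succ] at hj
        omega
    _ = (∑ p, m p).descFactorial n := by
        rw [Fin.prod_univ_eq_prod_range (d + 1 + ·) n, ← Nat.ascFactorial_eq_prod_range, hd,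
          Nat.add_descFactorial_eq_ascFactorial]

theorem interval_tuple_count_general {R : ℕ} (hR : 1 ≤ R) (i : ℤ)
    {m : Fin (n + 1) → ℕ} (hm : ∀ p, 1 ≤ m p) :
    (intervalTuples (fun p => m p * R) i).Finite ∧
      Nat.card (intervalTuples (fun p => m p * R) i) ≤
        R ^ n * (∑ p, m p).descFactorial n := by
  obtain ⟨hfin, hcard⟩ :=
    intervalTuples_finite_and_card_le (fun p => Nat.mul_pos (hm p) hR) i
  refine ⟨hfin, hcard.trans ?_⟩
  calc ∏ j : Fin n, ∑ r ∈ Iic j.succ, m r * R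
      = R ^ n * ∏ j : Fin n, ∑ r ∈ Iic j.succ, m r := by
        simp only [← sum_mul, prod_mul_distrib, prod_const, card_univ, Fintype.card_fin,
          mul_comm (R ^ n)]
    _ ≤ R ^ n * (∑ p, m p).descFactorial n := by
        gcongr
        exact prod_sum_Iic_succ_le_descFactorial hm

lemma pow_mul_descFactorial_le_factorial_div {R M : ℕ} (hR : 1 ≤ R) (hM : n + 1 ≤ M) :
    ((R ^ n * M.descFactorial n : ℕ) : ℝ) ≤
      M * (R : ℝ) ^ (n + 1) * M.factorial / (M - (n + 1) + 1).factorial := by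
  have hpow : R ^ n ≤ M * R ^ (n + 1) :=
    (Nat.pow_le_pow_right hR n.le_succ).trans (Nat.le_mul_of_pos_left _ (by omega))
  rw [show M - (n + 1) + 1 = M - n by omega, le_div_iff₀ (by positivity)]
  norm_cast
  calc R ^ n * M.descFactorial n * (M - n).factorial
      = R ^ n * M.factorial := by
        rw [mul_assoc, mul_comm (M.descFactorial n), Nat.factorial_mul_descFactorial (by omega)]
    _ ≤ M * R ^ (n + 1) * M.factorial := by gcongr

/-- Counting the sequences of intervals appearing in the combinatorial estimate:
the number of `k`-tuples of integer intervals of prescribed lengths `m_p R`, each meeting the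
union of the previous ones, and whose union has minimum `i`, is at most
`m · R^k · m!/(m−k+1)!` where `m = m₁ + ⋯ + m_k`. -/
theorem interval_tuple_count (R k : ℕ) (hR : 1 ≤ R) (hk : 1 ≤ k) (i : ℤ)
    (m : Fin k → ℕ) (hm : ∀ p, 1 ≤ m p) :
    (setOf fun I : Fin k → Finset ℤ =>
        (∀ p : Fin k, ∃ a : ℤ, I p = Finset.Icc a (a + ((m p * R : ℕ) : ℤ) - 1)) ∧
        (∀ j : Fin k, 0 < (j : ℕ) →
          (I j ∩ (Finset.univ.filter fun p => p < j).biUnion I).Nonempty) ∧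
        i ∈ Finset.univ.biUnion I ∧ ∀ x ∈ Finset.univ.biUnion I, i ≤ x).Finite ∧
    (Nat.card (setOf fun I : Fin k → Finset ℤ =>
        (∀ p : Fin k, ∃ a : ℤ, I p = Finset.Icc a (a + ((m p * R : ℕ) : ℤ) - 1)) ∧
        (∀ j : Fin k, 0 < (j : ℕ) →
          (I j ∩ (Finset.univ.filter fun p => p < j).biUnion I).Nonempty) ∧
        i ∈ Finset.univ.biUnion I ∧ ∀ x ∈ Finset.univ.biUnion I, i ≤ x) : ℝ)
      ≤ (∑ p, m p) * (R : ℝ) ^ k *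
          (Nat.factorial (∑ p, m p)) / (Nat.factorial ((∑ p, m p) - k + 1)) := by
  obtain ⟨n, rfl⟩ := Nat.exists_eq_add_of_le' hk
  obtain ⟨hfin, hcard⟩ := interval_tuple_count_general hR i hm
  have hM : n + 1 ≤ ∑ p, m p := by simpa using sum_le_sum fun p (_ : p ∈ univ) => hm p
  exact ⟨hfin, (Nat.cast_le.2 hcard).trans (mod_cast pow_mul_descFactorial_le_factorial_div hR hM)⟩
end

section
/- Let B be an operator on ℂ^{d_X} ⊗ ℂ^{d_Y}. Then ‖B − (tr_Y B) ⊗ 1_{d_Y}‖ ≤ sup{ ‖B(1_{d_X} ⊗ O) − (1_{d_X} ⊗ O)B‖ : O a d_Y × d_Y complex matrix with ‖O‖ ≤ 1 }. -/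
open scoped Kronecker

/-- The normalized partial trace over the second tensor factor. -/
noncomputable def ptrY {dX dY : ℕ} (B : Matrix (Fin dX × Fin dY) (Fin dX × Fin dY) ℂ) :
    Matrix (Fin dX) (Fin dX) ℂ :=
  fun x x' => (1 / (dY : ℂ)) * ∑ y, B (x, y) (x', y)

/-!
Conjugating `B` by `1 ⊗ U` and averaging over all signed permutation matrices `U` gives
`tr_Y B ⊗ 1`: the signs kill the blocks off the diagonal of the second factor, and the permutations
replace every diagonal block by their mean. Hence `B - tr_Y B ⊗ 1` is the average of
`B - (1 ⊗ U) B (1 ⊗ U)ᴴ = [B, 1 ⊗ U] (1 ⊗ U)ᴴ`, whose norm is that of `[B, 1 ⊗ U]`.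
-/

open Matrix Equiv Finset
open scoped BigOperators Matrix.Norms.L2Operator

theorem expect_smul_eq_expect {G α M : Type*} [Group G] [Fintype G] [Fintype α] [MulAction G α]
    [MulAction.IsPretransitive G α] [AddCommMonoid M] [Module ℚ≥0 M] (f : α → M) (a : α) :
    𝔼 g : G, f (g • a) = 𝔼 b, f b := by
  have : Nonempty α := ⟨a⟩
  have independent_of_base (b : α) : 𝔼 g : G, f (g • a) = 𝔼 g : G, f (g • b) := by
    obtain ⟨h, rfl⟩ := MulAction.exists_smul_eq G a b
    exact (Fintype.expect_equiv (Equiv.mulRight h) _ _ fun g ↦ by simp [mul_smul]).symm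
  calc 𝔼 g : G, f (g • a)
      = 𝔼 b, 𝔼 g : G, f (g • b) := by
        simp only [← independent_of_base, Fintype.expect_const]
    _ = 𝔼 g : G, 𝔼 b, f (g • b) := expect_comm _ _ _
    _ = 𝔼 _g : G, 𝔼 b, f b :=
        expect_congr rfl fun g _ ↦ Fintype.expect_equiv (MulAction.toPerm g) _ _ fun _ ↦ rfl
    _ = 𝔼 b, f b := Fintype.expect_const _

theorem expect_intUnits_mul_eq_one_apply {Y R : Type*} [Fintype Y] [DecidableEq Y] [Ring R]
    [Module ℚ≥0 R] (i k : Y) :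
    𝔼 s : Y → ℤˣ, (((s i * s k : ℤˣ) : ℤ) : R) = (1 : Matrix Y Y R) i k := by
  obtain rfl | hik := eq_or_ne i k
  · simp
  · have := IsAddTorsionFree.of_module_nnrat R
    have flip_sign := Fintype.expect_equiv (Equiv.mulLeft (Pi.mulSingle i (-1 : ℤˣ) : Y → ℤˣ))
      (fun s ↦ -(((s i * s k : ℤˣ) : ℤ) : R)) (fun s ↦ (((s i * s k : ℤˣ) : ℤ) : R))
      fun s ↦ by simp [Pi.mulSingle_eq_of_ne hik.symm]
    rw [one_apply_ne hik, ← neg_eq_self, ← expect_neg_distrib, flip_sign]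

theorem norm_expect_le_expect_norm {ι E : Type*} (𝕜 : Type*) [RCLike 𝕜]
    [SeminormedAddCommGroup E] [NormedSpace 𝕜 E] [Module ℚ≥0 E] (s : Finset ι) (f : ι → E) :
    ‖𝔼 i ∈ s, f i‖ ≤ 𝔼 i ∈ s, ‖f i‖ :=
  le_expect_of_subadditive norm_zero norm_add_le fun n x ↦ by
    simp [← NNRat.cast_smul_eq_nnqsmul 𝕜, ← NNRat.cast_smul_eq_nnqsmul ℝ, norm_smul]

theorem norm_sub_expect_conj_le {ι A : Type*} (𝕜 : Type*) [RCLike 𝕜] [Fintype ι] [Nonempty ι]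
    [NormedRing A] [StarRing A] [CStarRing A] [NormedSpace 𝕜 A] [Module ℚ≥0 A] {U : ι → A}
    (hU : ∀ i, U i ∈ unitary A) (b : A) :
    ‖b - 𝔼 i, U i * b * star (U i)‖ ≤ 𝔼 i, ‖b * U i - U i * b‖ := by
  have commutator_mul_star (i : ι) :
      (b * U i - U i * b) * star (U i) = b - U i * b * star (U i) := by
    rw [sub_mul, mul_assoc b, Unitary.mul_star_self_of_mem (hU i), mul_one]
  calc ‖b - 𝔼 i, U i * b * star (U i)‖
      = ‖𝔼 i, (b * U i - U i * b) * star (U i)‖ := by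
        simp only [commutator_mul_star, expect_sub_distrib, Fintype.expect_const]
    _ ≤ 𝔼 i, ‖(b * U i - U i * b) * star (U i)‖ := norm_expect_le_expect_norm 𝕜 _ _
    _ = 𝔼 i, ‖b * U i - U i * b‖ :=
        expect_congr rfl fun i _ ↦ CStarRing.norm_mul_mem_unitary _ (Unitary.star_mem (hU i))

/-- The partial trace over the second tensor factor, normalized so that `A ⊗ₖ 1` is sent to `A`. It
is encoded as an average over `Y`, with value `0` if `Y` is empty. -/
def normalizedPartialTrace {X Y R : Type*} [Fintype Y] [AddCommMonoid R] [Module ℚ≥0 R]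
    (B : Matrix (X × Y) (X × Y) R) : Matrix X X R :=
  of fun x x' ↦ 𝔼 y, B (x, y) (x', y)

theorem ptrY_eq_normalizedPartialTrace {dX dY : ℕ}
    (B : Matrix (Fin dX × Fin dY) (Fin dX × Fin dY) ℂ) : ptrY B = normalizedPartialTrace B := by
  ext x x'
  simp [ptrY, normalizedPartialTrace, Fintype.expect_eq_sum_div_card, div_eq_inv_mul]

/-- The signed permutation matrix sending a vector `v` to `i ↦ s i * v (σ i)`; averaging the
conjugates by `1 ⊗ₖ signedPermMatrix R σ s` computes the normalized partial trace. -/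
def signedPermMatrix {Y : Type*} (R : Type*) [Ring R] [DecidableEq Y] (σ : Perm Y) (s : Y → ℤˣ) :
    Matrix Y Y R :=
  of fun i j ↦ if σ i = j then ((s i : ℤ) : R) else 0

namespace signedPermMatrix

variable {X Y R 𝕜 : Type*} [Fintype X] [DecidableEq X] [Fintype Y] [DecidableEq Y]

theorem eq_diagonal_mul_permMatrix [Ring R] (σ : Perm Y) (s : Y → ℤˣ) :
    signedPermMatrix R σ s = diagonal (fun i ↦ ((s i : ℤ) : R)) * σ.permMatrix R := by
  ext i j
  simp [signedPermMatrix, PEquiv.toMatrix_apply, eq_comm]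

theorem mem_unitary [Ring R] [StarRing R] (σ : Perm Y) (s : Y → ℤˣ) :
    signedPermMatrix R σ s ∈ unitary (Matrix Y Y R) := by
  rw [eq_diagonal_mul_permMatrix]
  refine mul_mem ?_ ?_
  · simp [Unitary.mem_iff, star_eq_conjTranspose, diagonal_conjTranspose, ← Int.cast_mul]
  · simp [Unitary.mem_iff, star_eq_conjTranspose, ← permMatrix_mul]

theorem norm_le_one [RCLike 𝕜] (σ : Perm Y) (s : Y → ℤˣ) : ‖signedPermMatrix 𝕜 σ s‖ ≤ 1 := by
  rw [eq_diagonal_mul_permMatrix]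
  refine (l2_opNorm_mul _ _).trans (mul_le_one₀ ?_ (norm_nonneg _) (permMatrix_l2_opNorm_le σ))
  rw [l2_opNorm_diagonal, pi_norm_le_iff_of_nonneg zero_le_one]
  intro i
  obtain h | h := Int.units_eq_one_or (s i) <;> simp [h]

theorem one_kronecker_mul_apply [Ring R] (B : Matrix (X × Y) (X × Y) R) (σ : Perm Y) (s : Y → ℤˣ)
    (p q : X × Y) :
    (((1 : Matrix X X R) ⊗ₖ signedPermMatrix R σ s) * B) p q =
      ((s p.2 : ℤ) : R) * B (p.1, σ p.2) q := by
  simp [signedPermMatrix, mul_apply, one_apply, Fintype.sum_prod_type]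

theorem mul_star_one_kronecker_apply [Ring R] [StarRing R] (B : Matrix (X × Y) (X × Y) R)
    (σ : Perm Y) (s : Y → ℤˣ) (p q : X × Y) :
    (B * star ((1 : Matrix X X R) ⊗ₖ signedPermMatrix R σ s)) p q =
      B p (q.1, σ q.2) * ((s q.2 : ℤ) : R) := by
  simp [signedPermMatrix, star_eq_conjTranspose, mul_apply, one_apply, Fintype.sum_prod_type,
    apply_ite]

theorem one_kronecker_conj_apply [Ring R] [StarRing R] (B : Matrix (X × Y) (X × Y) R)
    (σ : Perm Y) (s : Y → ℤˣ) (p q : X × Y) :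
    (((1 : Matrix X X R) ⊗ₖ signedPermMatrix R σ s) * B *
        star ((1 : Matrix X X R) ⊗ₖ signedPermMatrix R σ s)) p q =
      B (p.1, σ p.2) (q.1, σ q.2) * (((s p.2 * s q.2 : ℤˣ) : ℤ) : R) := by
  rw [mul_star_one_kronecker_apply, one_kronecker_mul_apply, (Int.cast_commute _ _).eq, mul_assoc,
    ← Int.cast_mul, Units.val_mul]

theorem expect_one_kronecker_conj [Ring R] [StarRing R] [Algebra ℚ≥0 R]
    (B : Matrix (X × Y) (X × Y) R) :
    𝔼 u : Perm Y × (Y → ℤˣ), ((1 : Matrix X X R) ⊗ₖ signedPermMatrix R u.1 u.2) * B *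
        star ((1 : Matrix X X R) ⊗ₖ signedPermMatrix R u.1 u.2) =
      normalizedPartialTrace B ⊗ₖ (1 : Matrix Y Y R) := by
  ext ⟨x, i⟩ ⟨x', k⟩
  calc (𝔼 u : Perm Y × (Y → ℤˣ), ((1 : Matrix X X R) ⊗ₖ signedPermMatrix R u.1 u.2) * B *
        star ((1 : Matrix X X R) ⊗ₖ signedPermMatrix R u.1 u.2)) (x, i) (x', k)
      = 𝔼 u : Perm Y × (Y → ℤˣ),
          B (x, u.1 i) (x', u.1 k) * (((u.2 i * u.2 k : ℤˣ) : ℤ) : R) := by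
        simp only [expect, Matrix.smul_apply, Matrix.sum_apply, one_kronecker_conj_apply]
    _ = (𝔼 σ : Perm Y, B (x, σ i) (x', σ k)) *
          𝔼 s : Y → ℤˣ, (((s i * s k : ℤˣ) : ℤ) : R) := by
        rw [Fintype.expect_mul_expect, ← univ_product_univ, expect_product]
    _ = normalizedPartialTrace B x x' * (1 : Matrix Y Y R) i k := by
        rw [expect_intUnits_mul_eq_one_apply]
        obtain rfl | hik := eq_or_ne i k
        · exact congr_arg (· * _) (expect_smul_eq_expect (fun y ↦ B (x, y) (x', y)) i)
        · simp only [one_apply_ne hik, mul_zero]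

end signedPermMatrix

section Bound

variable {𝕜 X Y : Type*} [RCLike 𝕜] [Fintype X] [DecidableEq X] [Fintype Y] [DecidableEq Y]

theorem norm_sub_normalizedPartialTrace_le_expect (B : Matrix (X × Y) (X × Y) 𝕜) :
    ‖B - normalizedPartialTrace B ⊗ₖ (1 : Matrix Y Y 𝕜)‖ ≤
      𝔼 u : Perm Y × (Y → ℤˣ),
        ‖B * ((1 : Matrix X X 𝕜) ⊗ₖ signedPermMatrix 𝕜 u.1 u.2) -
          ((1 : Matrix X X 𝕜) ⊗ₖ signedPermMatrix 𝕜 u.1 u.2) * B‖ := by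
  rw [← signedPermMatrix.expect_one_kronecker_conj]
  have hU (u : Perm Y × (Y → ℤˣ)) :
      (1 : Matrix X X 𝕜) ⊗ₖ signedPermMatrix 𝕜 u.1 u.2 ∈ unitary (Matrix (X × Y) (X × Y) 𝕜) :=
    kronecker_mem_unitary (one_mem _) (signedPermMatrix.mem_unitary u.1 u.2)
  exact norm_sub_expect_conj_le 𝕜 hU B

theorem bddAbove_norm_commutator_one_kronecker (B : Matrix (X × Y) (X × Y) 𝕜) :
    BddAbove {r : ℝ | ∃ O : Matrix Y Y 𝕜, ‖O‖ ≤ 1 ∧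
      r = ‖B * ((1 : Matrix X X 𝕜) ⊗ₖ O) - ((1 : Matrix X X 𝕜) ⊗ₖ O) * B‖} := by
  let commutator : Matrix Y Y 𝕜 →ₗ[𝕜] Matrix (X × Y) (X × Y) 𝕜 :=
    (LinearMap.mulLeft 𝕜 B - LinearMap.mulRight 𝕜 B) ∘ₗ kroneckerBilinear (R := 𝕜) 1
  refine ⟨‖commutator.toContinuousLinearMap‖, ?_⟩
  rintro _ ⟨O, hO, rfl⟩
  exact commutator.toContinuousLinearMap.unit_le_opNorm O hO

theorem partial_trace_approx_general (B : Matrix (X × Y) (X × Y) 𝕜) :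
    ‖B - normalizedPartialTrace B ⊗ₖ (1 : Matrix Y Y 𝕜)‖ ≤
      sSup {r : ℝ | ∃ O : Matrix Y Y 𝕜, ‖O‖ ≤ 1 ∧
        r = ‖B * ((1 : Matrix X X 𝕜) ⊗ₖ O) - ((1 : Matrix X X 𝕜) ⊗ₖ O) * B‖} :=
  (norm_sub_normalizedPartialTrace_le_expect B).trans <| expect_le univ_nonempty fun u _ ↦
    le_csSup (bddAbove_norm_commutator_one_kronecker B)
      ⟨signedPermMatrix 𝕜 u.1 u.2, signedPermMatrix.norm_le_one u.1 u.2, rfl⟩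

end Bound

/-- `‖B − (tr_Y B) ⊗ 1‖` is bounded by the supremum of `‖[B, 1 ⊗ O]‖` over contractions `O`. -/
theorem partial_trace_approx {dX dY : ℕ}
    (B : Matrix (Fin dX × Fin dY) (Fin dX × Fin dY) ℂ) :
    opNorm (B - ptrY B ⊗ₖ (1 : Matrix (Fin dY) (Fin dY) ℂ)) ≤
      sSup {r : ℝ | ∃ O : Matrix (Fin dY) (Fin dY) ℂ, opNorm O ≤ 1 ∧
        r = opNorm (B * ((1 : Matrix (Fin dX) (Fin dX) ℂ) ⊗ₖ O) -
              ((1 : Matrix (Fin dX) (Fin dX) ℂ) ⊗ₖ O) * B)} := by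
  rw [ptrY_eq_normalizedPartialTrace]
  exact partial_trace_approx_general B
end

section
/- Let R ≥ 1 and n ≥ 1 be integers, δ > 0 and i ∈ ℤ; let Λ = [i−2nR+1, i+nR−1] ∩ ℤ and let h = (h_l)_{l∈Λ} be distributed according to the product of uniform measures on [0,1]^Λ. Then the probability that there exist m ∈ {1,…,n} and j ∈ [i−2nR+1, i] such that the interval S_j^{(m)} is resonant is at most 2nR · Σ_{m=1}^n 3^{mR} δ, which in turn is at most 4nR · 3^{nR} δ. -/
open MeasureTheory

/-- The interval `S_j^{(m)} = [j, j+mR−1]` is resonant for the fields `(h_l)` (given on the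
window `Λ`, which contains it) if some nonzero `η ∈ {−1,0,1}^{S_j^{(m)}}` makes
`|Σ_{l∈S_j^{(m)}} η_l h_l| < δ`. -/
def Resonant (R : ℕ) (δ : ℝ) (Λ : Finset ℤ) (h : ↥Λ → ℝ) (j : ℤ) (m : ℕ) : Prop :=
  ∃ η : ℤ → ℝ, (∀ l, η l = -1 ∨ η l = 0 ∨ η l = 1) ∧
    (∃ l ∈ Finset.Icc j (j + (m * R : ℕ) - 1), η l ≠ 0) ∧
    |∑ l : ↥Λ, (if (l : ℤ) ∈ Finset.Icc j (j + (m * R : ℕ) - 1) then η l * h l else 0)| < δ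

/-! For a fixed nonzero sign pattern `η`, choose a site `k` with `η_k = ±1`. With all other fields
frozen, `|∑ η_l h_l| < δ` confines `h_k` to an interval of length `2δ`, so by Fubini the event has
probability at most `2δ`. The patterns `η` and `-η` define the same event, so an interval with `N`
sites carries at most `(3^N - 1) / 2` events and is resonant with probability at most
`3^N δ`. A union bound over the intervals finishes the proof. Uniformity of the fields
enters only through the bound `2δ` on the mass of a ball of radius `δ`. -/

open ENNReal Finset
open scoped Pointwise

section ProductMeasure

variable {ι : Type*} [Fintype ι]

lemma measure_pi_le_of_forall_update_preimage_le [DecidableEq ι] {X : ι → Type*}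
    [∀ l, MeasurableSpace (X l)] {μ : ∀ l, Measure (X l)} [∀ l, IsProbabilityMeasure (μ l)]
    {s : Set (∀ l, X l)} (hs : MeasurableSet s) (k : ι) {C : ℝ≥0∞}
    (hC : ∀ x, μ k (Function.update x k ⁻¹' s) ≤ C) : Measure.pi μ s ≤ C := by
  obtain ⟨x₀⟩ := (Measure.pi μ).nonempty_of_neZero
  have hslice (x : ∀ l, X l) :
      ∫⁻ t, s.indicator (1 : (∀ l, X l) → ℝ≥0∞) (Function.update x k t) ∂μ k ≤ C :=
    (lintegral_indicator_one (hs.preimage (measurable_update x))).trans_le (hC x)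
  rw [← lintegral_indicator_one hs, lintegral_eq_lmarginal_univ x₀,
    lmarginal_erase' _ (measurable_one.indicator hs) (mem_univ k)]
  calc _ ≤ (∫⋯∫⁻_univ.erase k, (fun _ => C) ∂μ) x₀ := lmarginal_mono hslice x₀
    _ = C := by simp [lmarginal]

lemma measure_pi_abs_sum_mul_lt_le_s14 {μ : ι → Measure ℝ} [∀ l, IsProbabilityMeasure (μ l)]
    {c : ι → ℝ} {k : ι} (hk : c k ≠ 0) {δ : ℝ} {C : ℝ≥0∞}
    (hC : ∀ a, μ k (Metric.ball a (δ / |c k|)) ≤ C) :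
    Measure.pi μ {h | |∑ l, c l * h l| < δ} ≤ C := by
  classical
  refine measure_pi_le_of_forall_update_preimage_le
    (measurableSet_lt (by fun_prop) measurable_const) k fun x => ?_
  set a := ∑ l ∈ univ.erase k, c l * x l
  have hsum (t : ℝ) : ∑ l, c l * Function.update x k t l = c k * t + a := by
    rw [← add_sum_erase _ _ (mem_univ k), Function.update_self]
    congr 1
    exact sum_congr rfl fun l hl => by rw [Function.update_of_ne (ne_of_mem_erase hl)]
  refine (measure_mono fun t ht => ?_).trans (hC (-a / c k))
  have ht' : |c k * t + a| < δ := by rw [← hsum]; exact ht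
  have hdist : (t - -a / c k) * c k = c k * t + a := by field_simp; ring
  rwa [Metric.mem_ball, Real.dist_eq, lt_div_iff₀ (abs_pos.2 hk), ← abs_mul, hdist]

end ProductMeasure

lemma exists_finset_neg_representatives (α : Type*) [Fintype α] [InvolutiveNeg α] :
    ∃ T : Finset α, 2 * #T ≤ Fintype.card α ∧ (∀ a ∈ T, -a ≠ a) ∧
      ∀ a, -a ≠ a → a ∈ T ∨ -a ∈ T := by
  classical
  let e := Fintype.equivFin α
  let T : Finset α := {a | e a < e (-a)}
  have mem_T (a : α) : a ∈ T ↔ e a < e (-a) := by simp [T]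
  have hdisj : Disjoint T (-T) := by
    refine disjoint_left.2 fun a ha ha' => ?_
    rw [mem_neg', mem_T, neg_neg] at ha'
    exact lt_asymm ((mem_T a).1 ha) ha'
  refine ⟨T, ?_, fun a ha h => ?_, fun a ha => ?_⟩
  · calc 2 * #T = #(T ∪ -T) := by rw [card_union_of_disjoint hdisj, card_neg, two_mul]
      _ ≤ Fintype.card α := card_le_univ _
  · simp [mem_T, h] at ha
  · rw [mem_T, mem_T, neg_neg]
    exact lt_or_gt_of_ne fun h => ha (e.injective h).symm

/-- The resonance condition for a finite family of fields `h`, with the coefficients encoded as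
elements of `SignType = {-1, 0, 1}`. -/
def SignResonant {ι : Type*} [Fintype ι] (δ : ℝ) (h : ι → ℝ) : Prop :=
  ∃ σ : ι → SignType, σ ≠ 0 ∧ |∑ l, (σ l : ℝ) * h l| < δ

lemma abs_signType_coe_eq_one {K : Type*} [Ring K] [LinearOrder K] [IsOrderedRing K]
    {s : SignType} (hs : s ≠ 0) : |(s : K)| = 1 := by
  cases s <;> simp_all

lemma measure_pi_signResonant_le {ι : Type*} [Fintype ι] {μ : ι → Measure ℝ}
    [∀ l, IsProbabilityMeasure (μ l)] {δ : ℝ} {ε : ℝ≥0∞}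
    (hμ : ∀ l a, μ l (Metric.ball a δ) ≤ 2 * ε) :
    Measure.pi μ {h | SignResonant δ h} ≤ 3 ^ Fintype.card ι * ε := by
  classical
  let E (σ : ι → SignType) : Set (ι → ℝ) := {h | |∑ l, (σ l : ℝ) * h l| < δ}
  have hE_neg (σ : ι → SignType) : E (-σ) = E σ := by simp [E]
  have hE_le {σ : ι → SignType} (hσ : σ ≠ 0) : Measure.pi μ (E σ) ≤ 2 * ε := by
    obtain ⟨k, hk⟩ := Function.ne_iff.1 hσ
    have hk_abs : |(σ k : ℝ)| = 1 := abs_signType_coe_eq_one hk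
    refine measure_pi_abs_sum_mul_lt_le_s14 (k := k) (abs_ne_zero.1 (by simp [hk_abs])) fun a => ?_
    simpa [hk_abs] using hμ k a
  have hneg_ne {σ : ι → SignType} : -σ ≠ σ ↔ σ ≠ 0 := by
    simp [funext_iff, SignType.neg_eq_self_iff]
  obtain ⟨T, hT_card, hT_ne, hT_cover⟩ := exists_finset_neg_representatives (ι → SignType)
  have hcover : {h | SignResonant δ h} ⊆ ⋃ σ ∈ T, E σ := by
    rintro h ⟨σ, hσ, hlt⟩
    rw [Set.mem_iUnion₂]
    rcases hT_cover σ (hneg_ne.2 hσ) with hT | hT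
    · exact ⟨σ, hT, hlt⟩
    · exact ⟨-σ, hT, (hE_neg σ).symm ▸ hlt⟩
  calc Measure.pi μ {h | SignResonant δ h}
      ≤ ∑ σ ∈ T, Measure.pi μ (E σ) :=
        (measure_mono hcover).trans (measure_biUnion_finset_le _ _)
    _ ≤ ∑ _σ ∈ T, 2 * ε := sum_le_sum fun σ hσ => hE_le (hneg_ne.1 (hT_ne σ hσ))
    _ = (2 * #T : ℕ) * ε := by simp only [sum_const, nsmul_eq_mul]; push_cast; ring
    _ ≤ (3 ^ Fintype.card ι : ℕ) * ε := by
        gcongr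
        simpa [Fintype.card_fun, show Fintype.card SignType = 3 from rfl] using hT_card
    _ = 3 ^ Fintype.card ι * ε := by push_cast; rfl

lemma sum_Icc_one_pow_le_two_mul_pow {K : Type*} [CommSemiring K] [PartialOrder K]
    [IsOrderedRing K] {x : K} (hx : 2 ≤ x) (n : ℕ) :
    ∑ m ∈ Icc 1 n, x ^ m ≤ 2 * x ^ n := by
  have hx_nonneg : 0 ≤ x := zero_le_two.trans hx
  induction n with
  | zero => simp
  | succ n ih =>
    calc ∑ m ∈ Icc 1 (n + 1), x ^ m
        = ∑ m ∈ Icc 1 n, x ^ m + x ^ (n + 1) := sum_Icc_succ_top (by lia) _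
      _ ≤ 2 * x ^ n + x ^ (n + 1) := by gcongr
      _ ≤ x * x ^ n + x ^ (n + 1) := by gcongr
      _ = 2 * x ^ (n + 1) := by ring

lemma two_mul_mul_sum_three_pow_le {R : ℕ} (hR : 1 ≤ R) (n : ℕ) {ε : ℝ} (hε : 0 ≤ ε) :
    2 * (n : ℝ) * R * ∑ m ∈ Icc 1 n, (3 : ℝ) ^ (m * R) * ε
      ≤ 4 * n * R * (3 : ℝ) ^ (n * R) * ε := by
  have h3R : (2 : ℝ) ≤ 3 ^ R :=
    (by norm_num : (2 : ℝ) ≤ 3).trans (le_self_pow₀ (by norm_num) (by lia))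
  calc 2 * (n : ℝ) * R * ∑ m ∈ Icc 1 n, (3 : ℝ) ^ (m * R) * ε
      = 2 * n * R * ((∑ m ∈ Icc 1 n, ((3 : ℝ) ^ R) ^ m) * ε) := by
        simp only [sum_mul, pow_mul']
    _ ≤ 2 * n * R * (2 * ((3 : ℝ) ^ R) ^ n * ε) := by
        gcongr
        exact sum_Icc_one_pow_le_two_mul_pow h3R n
    _ = 4 * n * R * (3 : ℝ) ^ (n * R) * ε := by rw [pow_mul']; ring

/-- The interval `S_j^{(m)}` of `m * R` consecutive sites starting at `j`, written as in
`Resonant`. -/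
noncomputable abbrev siteInterval (R : ℕ) (j : ℤ) (m : ℕ) : Finset ℤ := Icc j (j + (m * R : ℕ) - 1)

lemma card_siteInterval (R : ℕ) (j : ℤ) (m : ℕ) : #(siteInterval R j m) = m * R := by
  rw [Int.card_Icc]
  lia

lemma siteInterval_subset_Icc (R : ℕ) {m n : ℕ} (hmn : m ≤ n) {a i j : ℤ} (hj : j ∈ Icc a i) :
    siteInterval R j m ⊆ Icc a (i + n * R - 1) := by
  rw [mem_Icc] at hj
  have hlen : ((m * R : ℕ) : ℤ) ≤ n * R := mod_cast Nat.mul_le_mul_right R hmn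
  exact Icc_subset_Icc hj.1 (by linarith [hj.2])

lemma card_Icc_sub_add_one (i : ℤ) (N : ℕ) : #(Icc (i - N + 1) i) = N := by
  rw [Int.card_Icc]
  lia

section Resonance

variable {R : ℕ} {δ : ℝ} {Λ : Finset ℤ}

lemma Resonant.signResonant_restrict {h : Λ → ℝ} {j : ℤ} {m : ℕ}
    (hΛ : siteInterval R j m ⊆ Λ) (hres : Resonant R δ Λ h j m) :
    SignResonant δ (restrict₂ (π := fun _ => ℝ) hΛ h) := by
  obtain ⟨η, hη, ⟨l₀, hl₀, hηl₀⟩, hlt⟩ := hres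
  have hsign (l : ℤ) : (SignType.sign (η l) : ℝ) = η l := by
    rcases hη l with hl | hl | hl <;> simp [hl]
  refine ⟨fun l => SignType.sign (η l), Function.ne_iff.2 ⟨⟨l₀, hl₀⟩, by simpa using hηl₀⟩, ?_⟩
  convert hlt using 2
  refine Fintype.sum_of_injective (Set.inclusion hΛ) (Set.inclusion_injective hΛ) _ _
    (fun l hl => if_neg fun hmem => hl ⟨⟨l, hmem⟩, rfl⟩) fun l => ?_
  rw [hsign]
  exact (if_pos l.2).symm

variable {μ : ℤ → Measure ℝ} [∀ l, IsProbabilityMeasure (μ l)] {ε : ℝ≥0∞}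

lemma measure_resonant_le {j : ℤ} {m : ℕ} (hΛ : siteInterval R j m ⊆ Λ)
    (hμ : ∀ l a, μ l (Metric.ball a δ) ≤ 2 * ε) :
    Measure.pi (fun l : Λ => μ l) {h | Resonant R δ Λ h j m} ≤ 3 ^ (m * R) * ε :=
  calc Measure.pi (fun l : Λ => μ l) {h | Resonant R δ Λ h j m}
      ≤ Measure.pi (fun l : Λ => μ l)
          (restrict₂ (π := fun _ => ℝ) hΛ ⁻¹' {h | SignResonant δ h}) :=
        measure_mono fun _ hres => hres.signResonant_restrict hΛ
    _ ≤ (Measure.pi fun l : Λ => μ l).map (restrict₂ (π := fun _ => ℝ) hΛ) {h | SignResonant δ h} :=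
        Measure.le_map_apply (measurable_restrict₂ hΛ).aemeasurable _
    _ = Measure.pi (fun l : siteInterval R j m => μ l) {h | SignResonant δ h} := by
        rw [← isProjectiveMeasureFamily_pi μ Λ (siteInterval R j m) hΛ]
    _ ≤ 3 ^ Fintype.card (siteInterval R j m) * ε :=
        measure_pi_signResonant_le fun l a => hμ l a
    _ = 3 ^ (m * R) * ε := by rw [Fintype.card_coe, card_siteInterval]

lemma measure_exists_resonant_le {M : Finset ℕ} {J : Finset ℤ}
    (hΛ : ∀ m ∈ M, ∀ j ∈ J, siteInterval R j m ⊆ Λ)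
    (hμ : ∀ l a, μ l (Metric.ball a δ) ≤ 2 * ε) :
    Measure.pi (fun l : Λ => μ l) {h | ∃ m ∈ M, ∃ j ∈ J, Resonant R δ Λ h j m}
      ≤ #J * ∑ m ∈ M, 3 ^ (m * R) * ε := by
  have hunion : {h | ∃ m ∈ M, ∃ j ∈ J, Resonant R δ Λ h j m} =
      ⋃ m ∈ M, ⋃ j ∈ J, {h | Resonant R δ Λ h j m} := by
    ext h
    simp
  calc Measure.pi (fun l : Λ => μ l) {h | ∃ m ∈ M, ∃ j ∈ J, Resonant R δ Λ h j m}
      ≤ ∑ m ∈ M, ∑ j ∈ J, Measure.pi (fun l : Λ => μ l) {h | Resonant R δ Λ h j m} := by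
        rw [hunion]
        exact (measure_biUnion_finset_le _ _).trans
          (sum_le_sum fun m _ => measure_biUnion_finset_le _ _)
    _ ≤ ∑ m ∈ M, ∑ _j ∈ J, 3 ^ (m * R) * ε :=
        sum_le_sum fun m hm => sum_le_sum fun j hj => measure_resonant_le (hΛ m hm j hj) hμ
    _ = #J * ∑ m ∈ M, 3 ^ (m * R) * ε := by simp only [sum_const, nsmul_eq_mul, mul_sum]

end Resonance

lemma volume_restrict_ball_le (s : Set ℝ) (a δ : ℝ) :
    volume.restrict s (Metric.ball a δ) ≤ ENNReal.ofReal (2 * δ) :=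
  (Measure.restrict_apply_le _ _).trans_eq (Real.volume_ball a δ)

instance isProbabilityMeasure_volume_restrict_Icc_zero_one :
    IsProbabilityMeasure (volume.restrict (Set.Icc (0 : ℝ) 1)) := ⟨by simp⟩

theorem prob_resonant_interval_general (R n : ℕ) (hR : 1 ≤ R) (δ ε : ℝ) (hε : 0 ≤ ε) (i : ℤ)
    (Λ : Finset ℤ) (hΛ : Icc (i - 2 * n * R + 1) (i + n * R - 1) ⊆ Λ)
    (μ : ℤ → Measure ℝ) [∀ l, IsProbabilityMeasure (μ l)]
    (hμ : ∀ l a, μ l (Metric.ball a δ) ≤ ENNReal.ofReal (2 * ε)) :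
    Measure.pi (fun l : Λ => μ l)
        {h | ∃ m : ℕ, 1 ≤ m ∧ m ≤ n ∧
          ∃ j : ℤ, i - 2 * n * R + 1 ≤ j ∧ j ≤ i ∧ Resonant R δ Λ h j m}
      ≤ ENNReal.ofReal (2 * n * R * ∑ m ∈ Icc 1 n, (3 : ℝ) ^ (m * R) * ε) ∧
    2 * (n : ℝ) * R * ∑ m ∈ Icc 1 n, (3 : ℝ) ^ (m * R) * ε
      ≤ 4 * n * R * (3 : ℝ) ^ (n * R) * ε := by
  constructor
  · have hJ_card : #(Icc (i - 2 * n * R + 1) i) = 2 * n * R := by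
      simpa using card_Icc_sub_add_one i (2 * n * R)
    have hbound := measure_exists_resonant_le (ε := ENNReal.ofReal ε) (M := Icc 1 n)
      (fun m hm _ hj => (siteInterval_subset_Icc R (mem_Icc.1 hm).2 hj).trans hΛ)
      fun l a => by simpa [ENNReal.ofReal_mul] using hμ l a
    rw [hJ_card] at hbound
    convert hbound using 1
    · simp only [mem_Icc, and_assoc]
    · rw [ENNReal.ofReal_mul (by positivity), ENNReal.ofReal_sum_of_nonneg fun _ _ => by positivity]
      simp [ENNReal.ofReal_mul, ENNReal.ofReal_pow]
  · exact two_mul_mul_sum_three_pow_le hR n hε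

/-- The probability that some interval `S_j^{(m)}`, `1 ≤ m ≤ n`, `j ∈ [i−2nR+1, i]`, is
resonant is at most `2nR · Σ_{m=1}^n 3^{mR} δ`, which is at most `4nR · 3^{nR} δ`. -/
theorem prob_resonant_interval (R n : ℕ) (hR : 1 ≤ R) (hn : 1 ≤ n) (δ : ℝ) (hδ : 0 < δ)
    (i : ℤ) (Λ : Finset ℤ)
    (hΛ : Λ = Finset.Icc (i - 2 * n * R + 1) (i + n * R - 1)) :
    Measure.pi (fun _ : ↥Λ => volume.restrict (Set.Icc (0 : ℝ) 1))
        {h : ↥Λ → ℝ | ∃ m : ℕ, 1 ≤ m ∧ m ≤ n ∧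
          ∃ j : ℤ, i - 2 * n * R + 1 ≤ j ∧ j ≤ i ∧ Resonant R δ Λ h j m}
      ≤ ENNReal.ofReal (2 * n * R * ∑ m ∈ Finset.Icc 1 n, (3 : ℝ) ^ (m * R) * δ) ∧
    2 * (n : ℝ) * R * ∑ m ∈ Finset.Icc 1 n, (3 : ℝ) ^ (m * R) * δ
      ≤ 4 * n * R * (3 : ℝ) ^ (n * R) * δ :=
  prob_resonant_interval_general R n hR δ δ hδ.le i Λ hΛ.ge
    (fun _ => volume.restrict (Set.Icc 0 1)) fun _ a => volume_restrict_ball_le _ a δ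
end

section
/- Let (T_α)_{α∈A} be a finite family of pairwise disjoint nonempty finite intervals in ℤ, let κ > 0, M > 0 and i ∈ ℤ, and set Q(i) = Σ_α |T_α| e^{−κ·dist(i,T_α)}. If Q(i) > M, then there exists α such that |T_α| e^{−κ·dist(i,T_α)/2} ≥ (M/2)(1 − e^{−κ/2}). -/
/-- The distance from a point `i ∈ ℤ` to a (nonempty) finite set `T ⊂ ℤ`. -/
noncomputable def distToSet (i : ℤ) (T : Finset ℤ) : ℝ :=
  sInf ((fun j : ℤ => |(i : ℝ) - (j : ℝ)|) '' ↑T)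

/-!
Factor `exp (-κ d) = exp (-κ d / 2) * exp (-κ d / 2)`, where `d` is the distance from `i` to `T α`.
Points of the sets nearest to `i` are distinct because the sets are disjoint, so with
`r = exp (-κ / 2)` the numbers `exp (-κ d / 2)` have sum at most
`∑ n : ℤ, r ^ |n| = (1 + r) / (1 - r)`. If, for some weights `w α` such as `|T α|`, every
`w α * exp (-κ d / 2)` were at most `M / (1 + r) * (1 - r)`, then `∑ α, w α * exp (-κ d)` would be
at most `M`.
-/

theorem hasSum_pow_natAbs {K : Type*} [NormedDivisionRing K] {r : K} (hr : ‖r‖ < 1) :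
    HasSum (fun n : ℤ => r ^ n.natAbs) ((1 + r) / (1 - r)) := by
  have hgeom : HasSum (fun n : ℕ => r ^ n) (1 - r)⁻¹ := hasSum_geometric_of_norm_lt_one hr
  have hneg : HasSum (fun n : ℕ => r ^ (-((n : ℤ) + 1)).natAbs) (r * (1 - r)⁻¹) := by
    simpa only [Int.natAbs_neg, ← Nat.cast_succ, Int.natAbs_natCast, pow_succ'] using
      hgeom.mul_left r
  rw [div_eq_mul_inv, add_mul, one_mul]
  exact HasSum.of_nat_of_neg_add_one hgeom hneg

theorem exists_mem_distToSet_eq_natAbs (i : ℤ) {T : Finset ℤ} (hT : T.Nonempty) :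
    ∃ j ∈ T, distToSet i T = (i - j).natAbs := by
  obtain ⟨j, hj, hdist⟩ : distToSet i T ∈ (fun j : ℤ => |(i : ℝ) - (j : ℝ)|) '' (T : Set ℤ) :=
    (hT.to_set.image _).csInf_mem (T.finite_toSet.image _)
  exact ⟨j, hj, by rw [← hdist, Nat.cast_natAbs, Int.cast_abs, Int.cast_sub]⟩

section DisjointFamily

open scoped Function

variable {A : Type*} {T : A → Finset ℤ}

theorem exists_injective_distToSet_eq_natAbs (hne : ∀ α, (T α).Nonempty)
    (hdisj : Pairwise (Disjoint on T)) (i : ℤ) :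
    ∃ n : A → ℤ, Function.Injective n ∧ ∀ α, distToSet i (T α) = (n α).natAbs := by
  choose p hpT hdist using fun α => exists_mem_distToSet_eq_natAbs i (hne α)
  have hp : Function.Injective p := fun α β h =>
    hdisj.eq (Finset.not_disjoint_iff.mpr ⟨p α, hpT α, h ▸ hpT β⟩)
  exact ⟨fun α => i - p α, sub_right_injective.comp hp, hdist⟩

theorem exists_hasSum_exp_neg_mul_distToSet_le (hne : ∀ α, (T α).Nonempty)
    (hdisj : Pairwise (Disjoint on T)) {c : ℝ} (hc : 0 < c) (i : ℤ) :
    ∃ S ≤ (1 + Real.exp (-c)) / (1 - Real.exp (-c)),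
      HasSum (fun α => Real.exp (-c * distToSet i (T α))) S := by
  obtain ⟨n, hn, hdist⟩ := exists_injective_distToSet_eq_natAbs hne hdisj i
  have hexp (α : A) :
      Real.exp (-c * distToSet i (T α)) = Real.exp (-c) ^ (n α).natAbs := by
    rw [hdist, mul_comm, Real.exp_nat_mul]
  have hnorm : ‖Real.exp (-c)‖ < 1 := by simpa using hc
  have hall := hasSum_pow_natAbs hnorm
  have hsub : Summable fun α => Real.exp (-c) ^ (n α).natAbs :=
    hall.summable.comp_injective hn
  simp only [hexp]
  refine ⟨_, ?_, hsub.hasSum⟩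
  exact hasSum_le_inj n hn (fun _ _ => by positivity) (fun _ => le_rfl) hsub.hasSum hall

theorem exists_large_interval_general (hne : ∀ α, (T α).Nonempty)
    (hdisj : Pairwise (Disjoint on T)) (w : A → ℝ) {κ M Q : ℝ} (hκ : 0 < κ)
    (hM : 0 ≤ M) (i : ℤ) (hsum : HasSum (fun α => w α * Real.exp (-κ * distToSet i (T α))) Q)
    (hQ : M < Q) :
    ∃ α, M / (1 + Real.exp (-κ / 2)) * (1 - Real.exp (-κ / 2))
        < w α * Real.exp (-κ * distToSet i (T α) / 2) := by
  obtain ⟨S, hS, hhalf⟩ := exists_hasSum_exp_neg_mul_distToSet_le hne hdisj (half_pos hκ) i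
  simp only [← neg_div, div_mul_eq_mul_div] at hS hhalf
  set r := Real.exp (-κ / 2)
  have hr : 0 < 1 - r := sub_pos.mpr (Real.exp_lt_one_iff.mpr (by linarith))
  have hr' : 0 < 1 + r := by positivity
  by_contra! hsmall
  have hterm (α : A) : w α * Real.exp (-κ * distToSet i (T α)) ≤
      M / (1 + r) * (1 - r) * Real.exp (-κ * distToSet i (T α) / 2) := by
    rw [← add_halves (-κ * distToSet i (T α)), Real.exp_add, ← mul_assoc, add_halves]
    exact mul_le_mul_of_nonneg_right (hsmall α) (Real.exp_nonneg _)
  refine hQ.not_ge ?_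
  calc
    Q ≤ M / (1 + r) * (1 - r) * S := hasSum_le hterm hsum (hhalf.mul_left _)
    _ ≤ M / (1 + r) * (1 - r) * ((1 + r) / (1 - r)) := by gcongr
    _ = M := by field_simp

end DisjointFamily

/-- If `Q(i) = Σ_α |T_α| e^{−κ·dist(i,T_α)} > M` for a disjoint family of nonempty finite
intervals, then some `α` satisfies `|T_α| e^{−κ·dist(i,T_α)/2} ≥ (M/2)(1−e^{−κ/2})`. -/
theorem exists_large_interval {A : Type*} [Fintype A] (T : A → Finset ℤ)
    (hne : ∀ α, (T α).Nonempty) (hint : ∀ α, ∃ a b : ℤ, T α = Finset.Icc a b)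
    (hdisj : ∀ α α', α ≠ α' → Disjoint (T α) (T α'))
    (κ M : ℝ) (hκ : 0 < κ) (hM : 0 < M) (i : ℤ)
    (hQ : M < ∑ α, ((T α).card : ℝ) * Real.exp (-κ * distToSet i (T α))) :
    ∃ α, (M / 2) * (1 - Real.exp (-κ / 2))
        ≤ ((T α).card : ℝ) * Real.exp (-κ * distToSet i (T α) / 2) := by
  obtain ⟨α, hα⟩ := exists_large_interval_general hne (fun _ _ => hdisj _ _)
    (fun α => ((T α).card : ℝ)) hκ hM.le i (hasSum_fintype _) hQ
  have hexp : Real.exp (-κ / 2) < 1 := Real.exp_lt_one_iff.mpr (by linarith)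
  refine ⟨α, le_trans ?_ hα.le⟩
  gcongr
  linarith
end
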